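/- arXiv:1709.07998 — 2 statements merged into one kernel-verified Lean document; each statement's English description precedes it below -/
import Mathlib

section
/- Let X be a power homogeneous compactum which is the union of countably many countably tight dense subspaces. Then L(X_δ) ≤ 𝔠, where X_δ is the G_δ-modification of X. -/
open Cardinal Set TopologicalSpace

universe u

/-- The tightness `t(X)`: the least infinite cardinal `κ` such that whenever
`x ∈ closure A` there is `B ⊆ A` with `#B ≤ κ` and `x ∈ closure B`. -/
noncomputable def tightness (X : Type u) [TopologicalSpace X] : Cardinal.{u} :=
  sInf {κ : Cardinal.{u} | ℵ₀ ≤ κ ∧ ∀ (A : Set X) (x : X), x ∈ closure A →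
    ∃ B ⊆ A, #B ≤ κ ∧ x ∈ closure B}

/-- The `κ`-closure of a set `A`. -/
noncomputable def clk {X : Type u} [TopologicalSpace X] (κ : Cardinal.{u}) (A : Set X) : Set X :=
  ⋃ (B : Set X) (_ : B ⊆ A ∧ #B ≤ κ), closure B

/-- A cover `𝒞` witnessing that `wt X ≤ κ`. -/
noncomputable def IsWtWitness {X : Type u} [TopologicalSpace X] (κ : Cardinal.{u}) (𝒞 : Set (Set X)) : Prop :=
  ⋃₀ 𝒞 = Set.univ ∧ #𝒞 ≤ 2 ^ κ ∧ ∀ C ∈ 𝒞, tightness ↥C ≤ κ ∧ clk (2 ^ κ) C = Set.univ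

/-- The weak tightness `wt(X)`. -/
noncomputable def wt (X : Type u) [TopologicalSpace X] : Cardinal.{u} :=
  sInf {κ : Cardinal.{u} | ℵ₀ ≤ κ ∧ ∃ 𝒞 : Set (Set X), IsWtWitness κ 𝒞}

/-- The Lindelöf number `L(X)`. -/
noncomputable def LindelofNumber (X : Type u) [TopologicalSpace X] : Cardinal.{u} :=
  sInf {κ : Cardinal.{u} | ℵ₀ ≤ κ ∧ ∀ 𝒰 : Set (Set X), (∀ U ∈ 𝒰, IsOpen U) →
    ⋃₀ 𝒰 = Set.univ → ∃ 𝒱 ⊆ 𝒰, #𝒱 ≤ κ ∧ ⋃₀ 𝒱 = Set.univ}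

/-- The pseudocharacter `ψ(X)`. -/
noncomputable def psi (X : Type u) [TopologicalSpace X] : Cardinal.{u} :=
  sInf {κ : Cardinal.{u} | ℵ₀ ≤ κ ∧ ∀ x : X, ∃ 𝒰 : Set (Set X),
    #𝒰 ≤ κ ∧ (∀ U ∈ 𝒰, IsOpen U ∧ x ∈ U) ∧ ⋂₀ 𝒰 = {x}}

/-- The closed pseudocharacter `ψ_c(X)`. -/
noncomputable def psic (X : Type u) [TopologicalSpace X] : Cardinal.{u} :=
  sInf {κ : Cardinal.{u} | ℵ₀ ≤ κ ∧ ∀ x : X, ∃ 𝒰 : Set (Set X),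
    #𝒰 ≤ κ ∧ (∀ U ∈ 𝒰, IsOpen U ∧ x ∈ U) ∧ (⋂ U ∈ 𝒰, closure U) = {x}}

/-- `A` is `𝒞`-saturated: `A ∩ C` is dense in `A` for every `C ∈ 𝒞`. -/
noncomputable def Saturated {X : Type u} [TopologicalSpace X] (𝒞 : Set (Set X)) (A : Set X) : Prop :=
  ∀ C ∈ 𝒞, A ⊆ closure (A ∩ C)

/-- The π-character `πχ(x, X)` of a point: least cardinality of a local π-base at `x`. -/
noncomputable def piCharPt {X : Type u} [TopologicalSpace X] (x : X) : Cardinal.{u} :=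
  sInf {κ : Cardinal.{u} | ∃ ℬ : Set (Set X), #ℬ ≤ κ ∧
    (∀ B ∈ ℬ, IsOpen B ∧ B.Nonempty) ∧ ∀ U : Set X, IsOpen U → x ∈ U → ∃ B ∈ ℬ, B ⊆ U}

/-- The π-character `πχ(X)`. -/
noncomputable def piChar (X : Type u) [TopologicalSpace X] : Cardinal.{u} :=
  ⨆ x : X, piCharPt x

/-- The character `χ(x, X)` of a point: least cardinality of a local base at `x`. -/
noncomputable def charPt {X : Type u} [TopologicalSpace X] (x : X) : Cardinal.{u} :=
  sInf {κ : Cardinal.{u} | ∃ ℬ : Set (Set X), #ℬ ≤ κ ∧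
    (∀ B ∈ ℬ, IsOpen B ∧ x ∈ B) ∧ ∀ U : Set X, IsOpen U → x ∈ U → ∃ B ∈ ℬ, B ⊆ U}

/-- The character `χ(X)`. -/
noncomputable def character (X : Type u) [TopologicalSpace X] : Cardinal.{u} :=
  ⨆ x : X, charPt x

/-- The density `d(X)`: least cardinality of a dense subset. -/
noncomputable def density (X : Type u) [TopologicalSpace X] : Cardinal.{u} :=
  sInf {κ : Cardinal.{u} | ∃ D : Set X, Dense D ∧ #D ≤ κ}

/-- A space is homogeneous if its homeomorphism group acts transitively. -/
noncomputable def Homogeneous (X : Type u) [TopologicalSpace X] : Prop :=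
  ∀ x y : X, ∃ h : X ≃ₜ X, h x = y

/-- A space is power homogeneous if some (nonempty) power of it is homogeneous. -/
noncomputable def PowerHomogeneous (X : Type u) [TopologicalSpace X] : Prop :=
  ∃ I : Type u, Nonempty I ∧ Homogeneous (I → X)

/-- A `G^c_κ`-set: `G = ⋂𝒰 = ⋂_{U ∈ 𝒰} closure U` for a family `𝒰` of `≤ κ` open sets. -/
noncomputable def GcSet {X : Type u} [TopologicalSpace X] (κ : Cardinal.{u}) (G : Set X) : Prop :=
  ∃ 𝒰 : Set (Set X), #𝒰 ≤ κ ∧ (∀ U ∈ 𝒰, IsOpen U) ∧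
    G = ⋂₀ 𝒰 ∧ G = ⋂ U ∈ 𝒰, closure U

/-- A subset is subseparable if it is contained in the closure of a countable set. -/
noncomputable def Subseparable {X : Type u} [TopologicalSpace X] (A : Set X) : Prop :=
  ∃ c : Set X, c.Countable ∧ A ⊆ closure c

/-- In a well-founded order, a choice of values that can always be continued below each index
extends to a global choice. -/
theorem exists_recursive_choice {Ω : Type*} {D : Type*} [Nonempty D] [LT Ω] [WellFoundedLT Ω]
    (Q : (a : Ω) → ((b : Ω) → b < a → D) → D → Prop)
    (h : ∀ (a : Ω) (f : Ω → D), (∀ b < a, Q b (fun c _ => f c) (f b)) →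
      ∃ d, Q a (fun c _ => f c) d) :
    ∃ f : Ω → D, ∀ a, Q a (fun c _ => f c) (f a) := by
  classical
  let G : (a : Ω) → ((b : Ω) → b < a → D) → D := fun a f =>
    if hd : ∃ d, Q a f d then hd.choose else Classical.arbitrary D
  let f : Ω → D := (wellFounded_lt (α := Ω)).fix G
  have hf : ∀ a, f a = G a (fun c _ => f c) := fun a => WellFounded.fix_eq _ _ _
  refine ⟨f, fun a => ?_⟩
  induction a using (wellFounded_lt (α := Ω)).induction with
  | _ a ih =>
    have hd := h a f ih
    rw [hf a]
    simp only [G, dif_pos hd]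
    exact hd.choose_spec

theorem exists_forall_lt_of_countable {Ω : Type*} [LinearOrder Ω] [Uncountable Ω]
    (hΩ : ∀ a : Ω, (Iio a).Countable) {s : Set Ω} (hs : s.Countable) :
    ∃ a, ∀ b ∈ s, b < a := by
  by_contra! h
  refine not_countable_univ (α := Ω) ((hs.biUnion (t := fun a _ => Iic a) fun a _ => ?_).mono ?_)
  · rw [← Iio_insert]
    exact (hΩ a).insert a
  · intro a _
    obtain ⟨b, hb, hab⟩ := h a
    exact mem_biUnion hb hab

/-- A weak form of the pressing-down lemma: a function to finite sets, regressive in the sense that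
the associated finite support lies below the argument, has an uncountable fibre. -/
theorem exists_not_countable_fiber {Ω : Type*} [LinearOrder Ω] [Uncountable Ω] [WellFoundedLT Ω]
    (hΩ : ∀ a : Ω, (Iio a).Countable) {J : Type*} [Countable J] (f : Ω → Finset (Ω × J))
    (hf : ∀ a, ∀ p ∈ f a, p.1 < a) : ∃ c, ¬ (f ⁻¹' {c}).Countable := by
  by_contra! h
  have hbd : ∀ d : Ω, ∃ e, d < e ∧ ∀ a, (∀ p ∈ f a, p.1 < d) → a < e := by
    intro d
    have : ({c : Finset (Ω × J) | ∀ p ∈ c, p.1 < d}).Countable := by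
      have h1 : ((Iio d) ×ˢ (univ : Set J)).Countable := (hΩ d).prod countable_univ
      have h2 := Set.countable_ofPred_finite_subset h1
      refine (h2.preimage (f := fun c : Finset (Ω × J) => (c : Set (Ω × J)))
        Finset.coe_injective).mono ?_
      intro c hc
      exact ⟨c.finite_toSet, fun p hp => ⟨hc p hp, mem_univ _⟩⟩
    have h3 := this.biUnion (t := fun c _ => f ⁻¹' {c}) fun c _ => h c
    obtain ⟨e, he⟩ := exists_forall_lt_of_countable hΩ (h3.insert d)
    exact ⟨e, he d (mem_insert _ _), fun a ha => he a (mem_insert_of_mem _ (mem_biUnion ha rfl))⟩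
  choose g hg hg' using hbd
  obtain ⟨a₀⟩ : Nonempty Ω := inferInstance
  let δ : ℕ → Ω := fun n => g^[n] a₀
  have hδ : ∀ n, δ (n + 1) = g (δ n) := fun n => Function.iterate_succ_apply' _ _ _
  have hmono : StrictMono δ := strictMono_nat_of_lt_succ fun n => by rw [hδ]; exact hg _
  obtain ⟨u, hu⟩ := exists_forall_lt_of_countable hΩ (countable_range δ)
  obtain ⟨s, hs, hs'⟩ := (wellFounded_lt (α := Ω)).has_min {s | ∀ n, δ n < s}
    ⟨u, fun n => hu _ (mem_range_self n)⟩
  have hlt : ∀ b < s, ∃ n, b < δ n := by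
    intro b hb
    by_contra! hn
    exact hs' b (fun n => (hmono n.lt_succ_self).trans_le (hn (n + 1))) hb
  have hfin : ∀ c : Finset (Ω × J), (∀ p ∈ c, p.1 < s) → ∃ n, ∀ p ∈ c, p.1 < δ n := by
    classical
    intro c
    induction c using Finset.induction_on with
    | empty => exact fun _ => ⟨0, by simp⟩
    | insert p c _ ih =>
      intro hc
      obtain ⟨n, hn⟩ := ih fun q hq => hc q (Finset.mem_insert_of_mem hq)
      obtain ⟨m, hm⟩ := hlt p.1 (hc p (Finset.mem_insert_self _ _))
      refine ⟨max n m, fun q hq => ?_⟩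
      rcases Finset.mem_insert.1 hq with rfl | hq
      · exact hm.trans_le (hmono.monotone (le_max_right _ _))
      · exact (hn q hq).trans_le (hmono.monotone (le_max_left _ _))
  obtain ⟨n, hn⟩ := hfin (f s) (hf s)
  have := hg' (δ n) s hn
  rw [← hδ] at this
  exact lt_asymm this (hs (n + 1))

/-- `C` is a countably tight subspace. -/
def CountablyTightSet {X : Type*} [TopologicalSpace X] (C : Set X) : Prop :=
  ∀ A ⊆ C, ∀ x ∈ C, x ∈ closure A → ∃ B ⊆ A, B.Countable ∧ x ∈ closure B

/-- The fibre over `ε` of the partial map to a power of the two-point discrete space with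
coordinates `g`. -/
def dyadicFiber {X I : Type*} (g : I → X → ℝ) (ε : I → Bool) : Set X :=
  {x | ∀ i, g i x = if ε i then 1 else 0}

theorem isClosed_dyadicFiber {X I : Type*} [TopologicalSpace X] {g : I → X → ℝ}
    (hg : ∀ i, Continuous (g i)) (ε : I → Bool) : IsClosed (dyadicFiber g ε) := by
  have : dyadicFiber g ε = ⋂ i, {x | g i x = if ε i then 1 else 0} := by
    ext x; simp [dyadicFiber]
  rw [this]
  exact isClosed_iInter fun i => isClosed_eq (hg i) continuous_const

/-- `K` meets every fibre over the cylinder of `p` on `D`. -/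
def MeetsCylinder {X I : Type*} (g : I → X → ℝ) (K : Set X) (D : Set I) (p : I → Bool) : Prop :=
  ∀ ε : I → Bool, (∀ i ∈ D, ε i = p i) → (K ∩ dyadicFiber g ε).Nonempty

/-- Shrinking `K` and fixing all coordinates of a block, one can avoid a countably tight set. -/
theorem exists_meetsCylinder_avoiding {X Ω : Type*} [TopologicalSpace X] [CompactSpace X]
    [Uncountable Ω] {g : ℕ × Ω → X → ℝ} (hg : ∀ i, Continuous (g i)) {C : Set X}
    (hC : CountablyTightSet C) (n : ℕ) {K : Set X} (hK : IsClosed K) {D : Set (ℕ × Ω)}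
    {p : ℕ × Ω → Bool} (hD : {a | (n, a) ∈ D}.Countable) (hKD : MeetsCylinder g K D p) :
    ∃ (K' : Set X) (D' : Set (ℕ × Ω)) (p' : ℕ × Ω → Bool), K' ⊆ K ∧ IsClosed K' ∧ D ⊆ D' ∧
      (∀ a, (n, a) ∈ D') ∧ (∀ m, m ≠ n → {a | (m, a) ∈ D}.Countable → {a | (m, a) ∈ D'}.Countable) ∧
      (∀ i ∈ D, p' i = p i) ∧ MeetsCylinder g K' D' p' ∧
      ∀ ε : ℕ × Ω → Bool, (∀ i ∈ D', ε i = p' i) → K' ∩ dyadicFiber g ε ∩ C = ∅ := by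
  classical
  by_cases hcase : ∃ (T : Finset (ℕ × Ω)) (p' : ℕ × Ω → Bool), (∀ i ∈ D, p' i = p i) ∧
      ∀ ε : ℕ × Ω → Bool, (∀ i ∈ D ∪ {i | i.1 = n} ∪ T, ε i = p' i) →
        K ∩ dyadicFiber g ε ∩ C = ∅
  · obtain ⟨T, p', hp', hε⟩ := hcase
    refine ⟨K, D ∪ {i | i.1 = n} ∪ T, p', Subset.rfl, hK, fun i hi => Or.inl (Or.inl hi),
      fun a => Or.inl (Or.inr rfl), fun m hm hmD => ?_, hp', ?_, hε⟩
    · have hT : {a | (m, a) ∈ (T : Set (ℕ × Ω))}.Countable :=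
        T.countable_toSet.preimage (Prod.mk_right_injective m)
      refine (hmD.union hT).mono ?_
      rintro a ((ha | ha) | ha)
      · exact Or.inl ha
      · exact absurd ha hm
      · exact Or.inr ha
    · exact fun ε hε' => hKD ε fun i hi => by rw [hε' i (Or.inl (Or.inl hi)), hp' i hi]
  · push Not at hcase
    let A : Set X := {x | x ∈ K ∩ C ∧ ∃ ε : ℕ × Ω → Bool, (∀ i ∈ D, ε i = p i) ∧
      x ∈ dyadicFiber g ε ∧ {a | ε (n, a) = true}.Countable}
    have hAK : closure A ⊆ K := closure_minimal (fun x hx => hx.1.1) hK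
    refine ⟨closure A, D ∪ {i | i.1 = n}, fun i => if i ∈ D then p i else true, hAK,
      isClosed_closure, subset_union_left, fun a => Or.inr rfl, fun m hm hmD => hmD.mono ?_,
      fun i hi => if_pos hi, ?_, ?_⟩
    · rintro a (ha | ha)
      · exact ha
      · exact absurd ha hm
    · intro ε hε
      have hεD : ∀ i ∈ D, ε i = p i := fun i hi => (hε i (Or.inl hi)).trans (if_pos hi)
      have : dyadicFiber g ε = ⋂ i, {x | g i x = if ε i then 1 else 0} := by
        ext x; simp [dyadicFiber]
      rw [this]
      refine isClosed_closure.isCompact.inter_iInter_nonempty _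
        (fun i => isClosed_eq (hg i) continuous_const) fun T => ?_
      obtain ⟨ε', hε', x, ⟨hxK, hxε'⟩, hxC⟩ := hcase T
        (fun i => if i ∈ D ∪ T then ε i else false)
        (fun i hi => (if_pos (show i ∈ D ∪ T from Or.inl hi)).trans (hεD i hi))
      refine ⟨x, subset_closure ⟨⟨hxK, hxC⟩, ε', fun i hi => ?_, hxε', ?_⟩, ?_⟩
      · exact (hε' i (Or.inl (Or.inl hi))).trans
          ((if_pos (show i ∈ D ∪ T from Or.inl hi)).trans (hεD i hi))
      · have hT : {a | (n, a) ∈ (T : Set (ℕ × Ω))}.Countable :=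
          T.countable_toSet.preimage (Prod.mk_right_injective n)
        refine (hD.union hT).mono fun a ha => ?_
        have ha' : ε' (n, a) = true := ha
        rw [hε' _ (Or.inl (Or.inr rfl))] at ha'
        by_contra hna
        rw [if_neg (show (n, a) ∉ D ∪ T from hna)] at ha'
        exact Bool.false_ne_true ha'
      · refine mem_iInter₂.2 fun i hi => ?_
        have h1 := hxε' i
        rw [hε' i (Or.inr hi), if_pos (show i ∈ D ∪ T from Or.inr hi)] at h1
        exact h1
    · intro ε hε
      rw [eq_empty_iff_forall_notMem]
      rintro q ⟨⟨hqA, hqε⟩, hqC⟩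
      obtain ⟨B, hBA, hBc, hqB⟩ := hC A (fun x hx => hx.1.2) q hqC hqA
      have h1 : (⋃ x ∈ B, {a | g (n, a) x ≠ 0}).Countable := by
        refine hBc.biUnion fun x hx => ?_
        obtain ⟨-, ε', -, hxε', hc⟩ := hBA hx
        refine hc.mono fun a ha => ?_
        have h2 := hxε' (n, a)
        by_contra h3
        rw [if_neg (show ¬ ε' (n, a) = true from h3)] at h2
        exact ha h2
      obtain ⟨a, ha⟩ : ∃ a, a ∉ (⋃ x ∈ B, {a | g (n, a) x ≠ 0}) ∪ {a | (n, a) ∈ D} := by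
        by_contra! h
        exact not_countable_univ ((h1.union hD).mono fun a _ => h a)
      have h4 : ∀ x ∈ B, g (n, a) x = 0 := by
        intro x hx
        by_contra h5
        exact ha (Or.inl (mem_biUnion hx h5))
      have h6 : g (n, a) q = 0 :=
        closure_minimal (s := B) (t := {x | g (n, a) x = 0}) h4
          (isClosed_eq (hg _) continuous_const) hqB
      have h7 := hqε (n, a)
      rw [(hε _ (Or.inr rfl)).trans (if_neg fun h => ha (Or.inr h)), h6] at h7
      norm_num at h7

/-- A compact space covered by countably many countably tight subspaces carries no uncountable
dyadic system. -/
theorem exists_dyadicFiber_eq_empty {X Ω : Type*} [TopologicalSpace X] [CompactSpace X]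
    [Uncountable Ω] {C : ℕ → Set X} (hcov : ⋃ n, C n = Set.univ)
    (hC : ∀ n, CountablyTightSet (C n)) {g : ℕ × Ω → X → ℝ} (hg : ∀ i, Continuous (g i)) :
    ∃ ε, dyadicFiber g ε = ∅ := by
  classical
  by_contra! hne
  let St := {s : Set X × Set (ℕ × Ω) × (ℕ × Ω → Bool) //
    IsClosed s.1 ∧ MeetsCylinder g s.1 s.2.1 s.2.2}
  let P : ℕ → St → Prop := fun n s => ∀ m, n ≤ m → {a | (m, a) ∈ s.1.2.1}.Countable
  let R : ℕ → St → St → Prop := fun n s t => t.1.1 ⊆ s.1.1 ∧ s.1.2.1 ⊆ t.1.2.1 ∧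
    (∀ a, (n, a) ∈ t.1.2.1) ∧ (∀ i ∈ s.1.2.1, t.1.2.2 i = s.1.2.2 i) ∧
    ∀ ε : ℕ × Ω → Bool, (∀ i ∈ t.1.2.1, ε i = t.1.2.2 i) → t.1.1 ∩ dyadicFiber g ε ∩ C n = ∅
  have step : ∀ n (s : {s // P n s}), ∃ t : {t // P (n + 1) t}, R n s.1 t.1 := by
    rintro n ⟨⟨⟨K, D, p⟩, hK, hKD⟩, hs⟩
    obtain ⟨K', D', p', h1, h2, h3, h4, h5, h6, h7, h8⟩ :=
      exists_meetsCylinder_avoiding hg (hC n) n hK (hs n le_rfl) hKD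
    exact ⟨⟨⟨⟨K', D', p'⟩, h2, h7⟩, fun m hm => h5 m (by omega) (hs m (by omega))⟩,
      h1, h3, h4, h6, h8⟩
  choose F hF using step
  let s₀ : {s // P 0 s} := ⟨⟨⟨univ, ∅, fun _ => true⟩, isClosed_univ, fun ε _ => by
    simpa using hne ε⟩, fun m _ => by simp⟩
  let s : (n : ℕ) → {s // P n s} := fun n => Nat.rec s₀ (fun n t => F n t) n
  have hs : ∀ n, R n (s n).1 (s (n + 1)).1 := fun n => hF n (s n)
  let ε : ℕ × Ω → Bool := fun i => (s (i.1 + 1)).1.1.2.2 i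
  have hD : Monotone fun n => (s n).1.1.2.1 := monotone_nat_of_le_succ fun n => (hs n).2.1
  have hK : Antitone fun n => (s n).1.1.1 := antitone_nat_of_succ_le fun n => (hs n).1
  have hp : ∀ n m, n ≤ m → ∀ i ∈ (s n).1.1.2.1, (s m).1.1.2.2 i = (s n).1.1.2.2 i := by
    intro n m hnm i hi
    induction m, hnm using Nat.le_induction with
    | base => rfl
    | succ m hnm ih => rw [(hs m).2.2.2.1 i (hD hnm hi), ih]
  have hε : ∀ n, ∀ i ∈ (s n).1.1.2.1, ε i = (s n).1.1.2.2 i := by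
    intro n i hi
    have hi' : i ∈ (s (i.1 + 1)).1.1.2.1 := (hs i.1).2.2.1 i.2
    rcases le_total n (i.1 + 1) with h | h
    · exact hp _ _ h i hi
    · exact (hp _ _ h i hi').symm
  obtain ⟨x, hx⟩ := IsCompact.nonempty_iInter_of_sequence_nonempty_isCompact_isClosed
    (fun n => (s n).1.1.1 ∩ dyadicFiber g ε)
    (fun n => inter_subset_inter_left _ (hs n).1)
    (fun n => (s n).1.2.2 ε (hε n))
    ((s 0).1.2.1.inter (isClosed_dyadicFiber hg ε)).isCompact
    (fun n => (s n).1.2.1.inter (isClosed_dyadicFiber hg ε))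
  obtain ⟨n, hn⟩ := mem_iUnion.1 (hcov.ge (mem_univ x))
  have := (hs n).2.2.2.2 ε (hε (n + 1))
  exact (this ▸ ⟨mem_iInter.1 hx (n + 1), hn⟩ : x ∈ (∅ : Set X))

theorem countable_Iio_toType_ord_aleph_one (a : (ℵ_ 1).ord.ToType) : (Iio a).Countable := by
  have := Cardinal.mk_Iio_lt a (by simp)
  rw [← Set.countable_coe_iff, ← Cardinal.mk_le_aleph0_iff, ← Order.lt_succ_iff]
  simpa using this

theorem uncountable_toType_ord_aleph_one : Uncountable (ℵ_ 1).ord.ToType := by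
  rw [← Cardinal.aleph0_lt_mk_iff]
  simp

/-- The point `x` has a countable local π-base. -/
def HasCountablePiBase {X : Type*} [TopologicalSpace X] (x : X) : Prop :=
  ∃ B : ℕ → Set X, (∀ k, IsOpen (B k) ∧ (B k).Nonempty) ∧ ∀ U, IsOpen U → x ∈ U → ∃ k, B k ⊆ U

/-- The set of points whose coordinates `g` satisfy the finitely many basic open conditions `c`. -/
def preimageBox {X G : Type*} (g : G → X → ℝ) (c : Finset (G × countableBasis ℝ)) : Set X :=
  {x | ∀ p ∈ c, g p.1 x ∈ (p.2 : Set ℝ)}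

theorem isOpen_preimageBox {X G : Type*} [TopologicalSpace X] {g : G → X → ℝ}
    (hg : ∀ i, Continuous (g i)) (c : Finset (G × countableBasis ℝ)) :
    IsOpen (preimageBox g c) := by
  have : preimageBox g c = ⋂ p ∈ c, g p.1 ⁻¹' (p.2 : Set ℝ) := by
    ext x; simp [preimageBox]
  rw [this]
  exact isOpen_biInter_finset fun p _ => (isOpen_of_mem_countableBasis p.2.2).preimage (hg _)

theorem exists_box_subset {G : Type*} {O : Set (G → ℝ)} (hO : IsOpen O) {z : G → ℝ} (hz : z ∈ O) :
    ∃ c : Finset (G × countableBasis ℝ), (∀ p ∈ c, z p.1 ∈ (p.2 : Set ℝ)) ∧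
      ∀ w : G → ℝ, (∀ p ∈ c, w p.1 ∈ (p.2 : Set ℝ)) → w ∈ O := by
  classical
  obtain ⟨I, u, hu, huO⟩ := isOpen_pi_iff.1 hO z hz
  have : ∀ a, ∃ j : countableBasis ℝ, a ∈ I → z a ∈ (j : Set ℝ) ∧ (j : Set ℝ) ⊆ u a := by
    intro a
    by_cases ha : a ∈ I
    · obtain ⟨v, hv, hzv, hvu⟩ := (isBasis_countableBasis ℝ).exists_subset_of_mem_open
        (hu a ha).2 (hu a ha).1
      exact ⟨⟨v, hv⟩, fun _ => ⟨hzv, hvu⟩⟩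
    · obtain ⟨v, hv, -, -⟩ := (isBasis_countableBasis ℝ).exists_subset_of_mem_open
        (mem_univ (0 : ℝ)) isOpen_univ
      exact ⟨⟨v, hv⟩, fun h => absurd h ha⟩
  choose j hj using this
  refine ⟨I.image fun a => (a, j a), ?_, fun w hw => huO fun a ha => ?_⟩
  · simp only [Finset.mem_image]
    rintro _ ⟨a, ha, rfl⟩
    exact (hj a ha).1
  · exact (hj a ha).2 (hw (a, j a) (Finset.mem_image_of_mem _ ha))

/-- If no point has a countable π-base, then over some nonempty basic open set of the partial map
with countably many coordinates `g` one can add a coordinate taking both values `0` and `1` on each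
fibre. -/
theorem exists_splitting_coordinate {X : Type*} [TopologicalSpace X] [CompactSpace X] [T2Space X]
    [Nonempty X] (hX : ∀ x : X, ¬ HasCountablePiBase x) {G : Type*} [Countable G] {g : G → X → ℝ}
    (hg : ∀ i, Continuous (g i)) :
    ∃ (c : Finset (G × countableBasis ℝ)) (f : X → ℝ), Continuous f ∧ (preimageBox g c).Nonempty ∧
      ∀ x ∈ preimageBox g c, ∀ t : Bool, ∃ y, (∀ i, g i y = g i x) ∧ f y = if t then 1 else 0 := by
  let Φ : X → G → ℝ := fun x i => g i x
  have hΦ : Continuous Φ := continuous_pi hg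
  have hcount : Countable (countableBasis ℝ) := (countable_countableBasis ℝ).to_subtype
  have hW : ∀ x, ∃ W, IsOpen W ∧ x ∈ W ∧
      ∀ c, (preimageBox g c).Nonempty → ¬ preimageBox g c ⊆ W := by
    intro x
    by_contra! h
    apply hX x
    have : Nonempty {c // (preimageBox g c).Nonempty} :=
      ⟨⟨∅, Classical.arbitrary X, by simp [preimageBox]⟩⟩
    obtain ⟨e, he⟩ := exists_surjective_nat {c // (preimageBox g c).Nonempty}
    refine ⟨fun k => preimageBox g (e k).1, fun k => ⟨isOpen_preimageBox hg _, (e k).2⟩,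
      fun U hU hxU => ?_⟩
    obtain ⟨c, hc, hcU⟩ := h U hU hxU
    obtain ⟨k, hk⟩ := he ⟨c, hc⟩
    exact ⟨k, by simpa only [hk] using hcU⟩
  choose W hWo hxW hW using hW
  have hfib : ∀ x x', ∃ y, y ∉ W x ∧ Φ y = Φ x' := by
    intro x x'
    by_contra! h
    have hcl : IsClosed (Φ '' (W x)ᶜ) := ((hWo x).isClosed_compl.isCompact.image hΦ).isClosed
    obtain ⟨c, hc, hc'⟩ := exists_box_subset hcl.isOpen_compl (z := Φ x') (by
      rintro ⟨y, hy, hyx⟩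
      exact h y hy hyx)
    refine hW x c ⟨x', hc⟩ fun y hy => ?_
    by_contra hyW
    exact hc' (Φ y) hy ⟨y, hyW, rfl⟩
  have hK : ∀ x, ∃ K ∈ nhds x, IsClosed K ∧ K ⊆ W x := fun x =>
    exists_mem_nhds_isClosed_subset ((hWo x).mem_nhds (hxW x))
  choose K hKx hKc hKW using hK
  obtain ⟨t, ht⟩ := CompactSpace.elim_nhds_subcover K hKx
  have hR : CompactSpace (range Φ) := isCompact_iff_compactSpace.1 (isCompact_range hΦ)
  have hne : Nonempty (range Φ) := ⟨⟨_, mem_range_self (Classical.arbitrary X)⟩⟩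
  obtain ⟨⟨x₀, hx₀⟩, hint⟩ := nonempty_interior_of_iUnion_of_closed
    (f := fun x : t => {r : range Φ | (r : G → ℝ) ∈ Φ '' K x})
    (fun x => (((hKc x).isCompact.image hΦ).isClosed).preimage continuous_subtype_val) (by
      refine eq_univ_of_forall ?_
      rintro ⟨_, y, rfl⟩
      have hy : y ∈ ⋃ x ∈ t, K x := ht ▸ mem_univ y
      obtain ⟨x, hx, hyx⟩ := mem_iUnion₂.1 hy
      exact mem_iUnion.2 ⟨⟨x, hx⟩, y, hyx, rfl⟩)
  obtain ⟨⟨_, x₁, rfl⟩, hr⟩ := hint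
  obtain ⟨V, hVs, hV, hrV⟩ := mem_interior.1 hr
  obtain ⟨O, hO, rfl⟩ := isOpen_induced_iff.1 hV
  obtain ⟨c, hc, hcO⟩ := exists_box_subset hO hrV
  obtain ⟨f, hf0, hf1, -⟩ := exists_continuous_zero_one_of_isClosed (hKc x₀)
    (hWo x₀).isClosed_compl (disjoint_compl_right_iff_subset.2 (hKW x₀))
  refine ⟨c, f, f.continuous, ⟨x₁, hc⟩, fun x hx t => ?_⟩
  cases t
  · obtain ⟨y, hy, hyx⟩ : Φ x ∈ Φ '' K x₀ := hVs (show (⟨Φ x, mem_range_self x⟩ : range Φ) ∈ _ from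
      hcO (Φ x) hx)
    exact ⟨y, fun i => congrFun hyx i, by simpa using hf0 hy⟩
  · obtain ⟨y, hy, hyx⟩ := hfib x₀ x
    exact ⟨y, fun i => congrFun hyx i, by simpa using hf1 hy⟩

/-- A nonempty compactum covered by countably many countably tight subspaces has a point with a
countable π-base. -/
theorem exists_hasCountablePiBase {X : Type*} [TopologicalSpace X] [CompactSpace X] [T2Space X]
    [Nonempty X] {C : ℕ → Set X} (hcov : ⋃ n, C n = Set.univ)
    (hC : ∀ n, CountablyTightSet (C n)) : ∃ x : X, HasCountablePiBase x := by
  classical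
  by_contra! hX
  let Ω : Type := (ℵ_ 1).ord.ToType
  have hΩ : ∀ a : Ω, (Iio a).Countable := countable_Iio_toType_ord_aleph_one
  have hΩu : Uncountable Ω := uncountable_toType_ord_aleph_one
  have hcount : Countable (countableBasis ℝ) := (countable_countableBasis ℝ).to_subtype
  obtain ⟨F, hF⟩ := exists_recursive_choice (Ω := Ω)
    (D := (X → ℝ) × Finset (Ω × countableBasis ℝ))
    (fun a prev d => ∀ g : Ω → X → ℝ, (∀ b (h : b < a), g b = (prev b h).1) →
      Continuous d.1 ∧ (∀ p ∈ d.2, p.1 < a) ∧ (preimageBox g d.2).Nonempty ∧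
      ∀ x ∈ preimageBox g d.2, ∀ t : Bool, ∃ y, (∀ b < a, g b y = g b x) ∧
        d.1 y = if t then 1 else 0) (by
      intro a f hf
      have : Countable (Iio a) := (hΩ a).to_subtype
      obtain ⟨c, φ, hφ, hne, hsp⟩ := exists_splitting_coordinate hX (G := Iio a)
        (g := fun b => (f b).1) fun b => (hf b b.2 (fun b => (f b).1) fun _ _ => rfl).1
      refine ⟨⟨φ, c.image fun p => (p.1.1, p.2)⟩, fun g hg => ?_⟩
      have hbox : preimageBox g (c.image fun p => (p.1.1, p.2)) =
          preimageBox (fun b : Iio a => (f b).1) c := by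
        ext x
        simp only [preimageBox, mem_ofPred_eq, Finset.forall_mem_image]
        exact forall₂_congr fun p _ => by rw [hg _ p.1.2]
      refine ⟨hφ, ?_, hbox ▸ hne, fun x hx t => ?_⟩
      · simp only [Finset.forall_mem_image]
        exact fun p _ => p.1.2
      · obtain ⟨y, hy, hy'⟩ := hsp x (hbox ▸ hx) t
        exact ⟨y, fun b hb => by rw [hg b hb]; exact hy ⟨b, hb⟩, hy'⟩)
  let g : Ω → X → ℝ := fun a => (F a).1
  replace hF := fun a => hF a g fun _ _ => rfl
  obtain ⟨c, hc⟩ := exists_not_countable_fiber hΩ (fun a => (F a).2) fun a => (hF a).2.1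
  let S : Set Ω := (fun a => (F a).2) ⁻¹' {c}
  have hSc : ∀ a ∈ S, (F a).2 = c := fun a ha => ha
  have hSu : Uncountable S := by
    rw [← not_countable_iff, Set.countable_coe_iff]
    exact hc
  have hind : ∀ (ε : Ω → Bool) (s : Finset Ω), (∀ a ∈ s, a ∈ S) →
      ∃ x ∈ preimageBox g c, ∀ a ∈ s, g a x = if ε a then 1 else 0 := by
    intro ε s
    induction s using Finset.induction_on_max with
    | empty =>
      intro _
      obtain ⟨⟨a, ha⟩⟩ : Nonempty S := inferInstance
      obtain ⟨x, hx⟩ := (hF a).2.2.1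
      exact ⟨x, hSc a ha ▸ hx, by simp⟩
    | insert a s hs ih =>
      intro hsS
      obtain ⟨x, hx, hxs⟩ := ih fun b hb => hsS b (Finset.mem_insert_of_mem hb)
      have hac := hSc a (hsS a (Finset.mem_insert_self _ _))
      obtain ⟨y, hy, hya⟩ := (hF a).2.2.2 x (hac.symm ▸ hx) (ε a)
      refine ⟨y, fun p hp => ?_, fun b hb => ?_⟩
      · rw [hy _ ((hF a).2.1 p (hac.symm ▸ hp))]
        exact hx p hp
      · rcases Finset.mem_insert.1 hb with rfl | hb
        · exact hya
        · rw [hy b (hs b hb)]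
          exact hxs b hb
  obtain ⟨e⟩ : Nonempty (ℕ × S ≃ S) := by
    rw [← Cardinal.eq, Cardinal.mk_prod]
    simp [Cardinal.aleph0_mul_eq (Cardinal.aleph0_le_mk S)]
  have hgc : ∀ i : ℕ × S, Continuous (g (e i)) := fun i => (hF _).1
  obtain ⟨ε, hε⟩ := exists_dyadicFiber_eq_empty hcov hC (g := fun i : ℕ × S => g (e i)) hgc
  have : dyadicFiber (fun i : ℕ × S => g (e i)) ε =
      ⋂ i, {x | g (e i) x = if ε i then 1 else 0} := by
    ext x; simp [dyadicFiber]
  rw [this] at hε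
  refine Set.Nonempty.ne_empty ?_ hε
  refine CompactSpace.iInter_nonempty
    (fun i => isClosed_eq (hgc i) continuous_const) fun T => ?_
  obtain ⟨x, -, hx⟩ := hind (fun a => if h : a ∈ S then ε (e.symm ⟨a, h⟩) else true)
    (T.image fun i => (e i : Ω)) (by
      simp only [Finset.forall_mem_image]
      exact fun i _ => (e i).2)
  refine ⟨x, mem_iInter₂.2 fun i hi => ?_⟩
  have := hx _ (Finset.mem_image_of_mem _ hi)
  simpa using this

theorem exists_isClosed_isGδ_subset {X : Type*} [TopologicalSpace X] [CompactSpace X] [T2Space X]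
    {x : X} {U : Set X} (hU : IsOpen U) (hx : x ∈ U) :
    ∃ H, IsClosed H ∧ IsGδ H ∧ x ∈ H ∧ H ⊆ U := by
  obtain ⟨f, hf0, hf1, -⟩ := exists_continuous_zero_one_of_isClosed (isClosed_singleton (x := x))
    hU.isClosed_compl (disjoint_compl_right_iff_subset.2 (singleton_subset_iff.2 hx))
  refine ⟨f ⁻¹' {0}, isClosed_singleton.preimage f.continuous,
    isClosed_singleton.isGδ.preimage f.continuous, hf0 (mem_singleton x), fun y hy => ?_⟩
  by_contra hyU
  have h1 : f y = 1 := hf1 hyU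
  have h0 : f y = 0 := hy
  exact zero_ne_one (h0.symm.trans h1)

/-- A point with a countable π-base in a closed `G_δ` subspace lies in the closure of a countable
subset of any given dense set. -/
theorem HasCountablePiBase.exists_countable_mem_closure {X : Type*} [TopologicalSpace X]
    [CompactSpace X] [T2Space X] {H : Set X} (hHc : IsClosed H) (hHg : IsGδ H) {x : H}
    (hx : HasCountablePiBase x) {D : Set X} (hD : Dense D) :
    ∃ c ⊆ D, c.Countable ∧ (x : X) ∈ closure c := by
  obtain ⟨V, hVo, hV⟩ := hHg.eq_iInter_nat
  obtain ⟨B, hB, hBx⟩ := hx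
  have hW : ∀ m, ∃ W, IsOpen W ∧ H ⊆ W ∧ closure W ⊆ V m := fun m =>
    normal_exists_closure_subset hHc (hVo m) (hV ▸ iInter_subset V m)
  choose W hWo hHW hWV using hW
  have hO : ∀ k, ∃ O, IsOpen O ∧ (Subtype.val ⁻¹' O : Set H) = B k := fun k =>
    isOpen_induced_iff.1 (hB k).1
  choose O hO hOB using hO
  have hz : ∀ k, ∃ z ∈ H, z ∈ O k := by
    intro k
    obtain ⟨z, hz⟩ := (hB k).2
    rw [← hOB k] at hz
    exact ⟨z, z.2, hz⟩
  choose z hzH hzO using hz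
  have hK : ∀ k, ∃ K ∈ nhds (z k), IsClosed K ∧ K ⊆ O k := fun k =>
    exists_mem_nhds_isClosed_subset ((hO k).mem_nhds (hzO k))
  choose K hKz hKc hKO using hK
  have hd : ∀ k m : ℕ, ∃ d ∈ D, d ∈ K k ∧ ∀ j ≤ m, d ∈ W j := by
    intro k m
    obtain ⟨d, hd, hdD⟩ := hD.inter_open_nonempty (interior (K k) ∩ ⋂ j ∈ Iic m, W j)
      (isOpen_interior.inter ((finite_Iic m).isOpen_biInter fun j _ => hWo j))
      ⟨z k, mem_interior_iff_mem_nhds.2 (hKz k), mem_iInter₂.2 fun j _ => hHW j (hzH k)⟩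
    exact ⟨d, hdD, interior_subset hd.1, fun j hj => mem_iInter₂.1 hd.2 j hj⟩
  choose d hdD hdK hdW using hd
  refine ⟨range fun p : ℕ × ℕ => d p.1 p.2, ?_, countable_range _, ?_⟩
  · rintro _ ⟨p, rfl⟩
    exact hdD _ _
  · refine mem_closure_iff.2 fun U hU hxU => ?_
    obtain ⟨k, hk⟩ := hBx (Subtype.val ⁻¹' U) (hU.preimage continuous_subtype_val) hxU
    obtain ⟨q, hq⟩ := IsCompact.nonempty_iInter_of_sequence_nonempty_isCompact_isClosed
      (fun m => closure (d k '' Ici m))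
      (fun m => closure_mono (image_mono (Ici_subset_Ici.2 m.le_succ)))
      (fun m => ⟨d k m, subset_closure (mem_image_of_mem _ self_mem_Ici)⟩)
      isClosed_closure.isCompact (fun m => isClosed_closure)
    rw [mem_iInter] at hq
    have hqK : q ∈ K k := closure_minimal (by
      rintro _ ⟨j, -, rfl⟩
      exact hdK k j) (hKc k) (hq 0)
    have hqH : q ∈ H := by
      rw [hV]
      refine mem_iInter.2 fun m => hWV m (closure_mono ?_ (hq m))
      rintro _ ⟨j, hj, rfl⟩
      exact hdW k j m hj
    have hqU : q ∈ U := by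
      have : (⟨q, hqH⟩ : H) ∈ B k := by
        rw [← hOB k]
        exact hKO k hqK
      exact hk this
    obtain ⟨y, hyU, j, -, rfl⟩ := mem_closure_iff.1 (hq 0) U hU hqU
    exact ⟨_, hyU, ⟨k, j⟩, rfl⟩

theorem CountablyTightSet.preimage_val {X : Type*} [TopologicalSpace X] {C : Set X}
    (hC : CountablyTightSet C) (H : Set X) : CountablyTightSet (Subtype.val ⁻¹' C : Set H) := by
  intro A hA x hx hxA
  obtain ⟨B, hBA, hBc, hxB⟩ := hC (Subtype.val '' A) (image_subset_iff.2 hA) x hx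
    (closure_subtype.1 hxA)
  refine ⟨Subtype.val ⁻¹' B, fun y hy => ?_, hBc.preimage Subtype.val_injective, ?_⟩
  · obtain ⟨z, hz, hzy⟩ := hBA hy
    exact Subtype.val_injective hzy ▸ hz
  · rw [closure_subtype, Subtype.image_preimage_coe, inter_eq_right.2]
    · exact hxB
    · intro y hy
      obtain ⟨z, -, rfl⟩ := hBA hy
      exact z.2

/-- In a compactum covered by countably many countably tight dense subspaces, every nonempty open
set contains a nonempty closed `G_δ` set inside the closure of a countable set. -/
theorem exists_isGδ_subset_closure_countable {X : Type*} [TopologicalSpace X] [CompactSpace X]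
    [T2Space X] {C : ℕ → Set X} (hcov : ⋃ n, C n = Set.univ)
    (hC : ∀ n, CountablyTightSet (C n)) (hd : ∀ n, Dense (C n)) {O : Set X} (hO : IsOpen O)
    (hne : O.Nonempty) : ∃ K c : Set X, K.Nonempty ∧ IsClosed K ∧ IsGδ K ∧ K ⊆ O ∧ c.Countable ∧
      K ⊆ closure c := by
  classical
  by_contra! hneg
  obtain ⟨o, ho⟩ := hne
  have : Nonempty X := ⟨o⟩
  let Ω : Type := (ℵ_ 1).ord.ToType
  have hΩ : ∀ a : Ω, (Iio a).Countable := countable_Iio_toType_ord_aleph_one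
  have hΩu : Uncountable Ω := uncountable_toType_ord_aleph_one
  obtain ⟨F, hF⟩ := exists_recursive_choice (Ω := Ω) (D := Set X × X × (ℕ → Set X))
    (fun a prev d => IsClosed d.1 ∧ IsGδ d.1 ∧ d.1 ⊆ O ∧ (∀ b (h : b < a), d.1 ⊆ (prev b h).1) ∧
      (∀ y ∈ d.1, y ∉ closure (⋃ (b) (h : b < a) (n), (prev b h).2.2 n)) ∧ d.2.1 ∈ d.1 ∧
      ∀ n, d.2.2 n ⊆ C n ∧ (d.2.2 n).Countable ∧ d.2.1 ∈ closure (d.2.2 n)) (by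
    intro a f hf
    obtain ⟨H₁, h1c, h1g, h1O, h1f, h1n⟩ : ∃ H₁, IsClosed H₁ ∧ IsGδ H₁ ∧ H₁ ⊆ O ∧
        (∀ b < a, H₁ ⊆ (f b).1) ∧ H₁.Nonempty := by
      by_cases ha : ∃ b, b < a
      · obtain ⟨b₀, hb₀⟩ := ha
        have : Nonempty (Iio a) := ⟨⟨b₀, hb₀⟩⟩
        have : Countable (Iio a) := (hΩ a).to_subtype
        refine ⟨⋂ b : Iio a, (f b).1, isClosed_iInter fun b => (hf b b.2).1,
          .iInter fun b => (hf b b.2).2.1, (iInter_subset _ ⟨b₀, hb₀⟩).trans (hf b₀ hb₀).2.2.1,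
          fun b hb => iInter_subset (fun b : Iio a => (f b).1) ⟨b, hb⟩, ?_⟩
        refine IsCompact.nonempty_iInter_of_directed_nonempty_isCompact_isClosed _
          (directed_of_isDirected_le ?_) (fun b => ⟨_, (hf b b.2).2.2.2.2.2.1⟩)
          (fun b => (hf b b.2).1.isCompact) fun b => (hf b b.2).1
        rintro ⟨b, hb⟩ ⟨b', hb'⟩ (hle : b ≤ b')
        rcases hle.eq_or_lt with rfl | hlt
        · exact Subset.rfl
        · exact (hf b' hb').2.2.2.1 b hlt
      · obtain ⟨H, hH1, hH2, hH3, hH4⟩ := exists_isClosed_isGδ_subset hO ho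
        exact ⟨H, hH1, hH2, hH4, fun b hb => absurd ⟨b, hb⟩ ha, o, hH3⟩
    have hcc : (⋃ (b) (_ : b < a) (n), (f b).2.2 n).Countable :=
      (hΩ a).biUnion fun b hb => countable_iUnion fun n => ((hf b hb).2.2.2.2.2.2 n).2.1
    obtain ⟨y, hy1, hyc⟩ := not_subset.1 (hneg H₁ _ h1n h1c h1g h1O hcc)
    obtain ⟨H₂, h2c, h2g, hy2, h2s⟩ := exists_isClosed_isGδ_subset isClosed_closure.isOpen_compl hyc
    have hc := h1c.inter h2c
    have hg := h1g.inter h2g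
    have : CompactSpace ↥(H₁ ∩ H₂) := isCompact_iff_compactSpace.1 hc.isCompact
    have : Nonempty ↥(H₁ ∩ H₂) := ⟨⟨y, hy1, hy2⟩⟩
    obtain ⟨x, hx⟩ := exists_hasCountablePiBase (X := ↥(H₁ ∩ H₂))
      (C := fun n => Subtype.val ⁻¹' C n) (by rw [← preimage_iUnion, hcov, preimage_univ])
      fun n => (hC n).preimage_val _
    choose c hcC hcc hxc using fun n => hx.exists_countable_mem_closure hc hg (hd n)
    exact ⟨⟨H₁ ∩ H₂, x, c⟩, hc, hg, inter_subset_left.trans h1O,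
      fun b hb => inter_subset_left.trans (h1f b hb), fun z hz => h2s hz.2, x.2,
      fun n => ⟨hcC n, hcc n, hxc n⟩⟩)
  obtain ⟨q, hq⟩ := IsCompact.nonempty_iInter_of_directed_nonempty_isCompact_isClosed
    (fun a : Ω => closure ((fun b => (F b).2.1) '' Ici a))
    (directed_of_isDirected_le fun a b hab => closure_mono (image_mono (Ici_subset_Ici.2 hab)))
    (fun a => ⟨(F a).2.1, subset_closure (mem_image_of_mem _ self_mem_Ici)⟩)
    (fun a => isClosed_closure.isCompact) (fun a => isClosed_closure)
  rw [mem_iInter] at hq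
  have hqH : ∀ a, q ∈ (F a).1 := by
    intro a
    refine closure_minimal ?_ (hF a).1 (hq a)
    rintro _ ⟨b, hb, rfl⟩
    rcases (show a ≤ b from hb).eq_or_lt with rfl | hlt
    · exact (hF a).2.2.2.2.2.1
    · exact (hF b).2.2.2.1 a hlt (hF b).2.2.2.2.2.1
  obtain ⟨n, hn⟩ := mem_iUnion.1 (hcov.ge (mem_univ q))
  obtain ⟨a₀⟩ : Nonempty Ω := inferInstance
  have hqc : q ∈ closure (⋃ b, (F b).2.2 n) := by
    refine closure_minimal ?_ isClosed_closure (hq a₀)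
    rintro _ ⟨b, -, rfl⟩
    exact closure_mono (subset_iUnion (fun b => (F b).2.2 n) b) ((hF b).2.2.2.2.2.2 n).2.2
  obtain ⟨B, hBs, hBc, hqB⟩ := hC n _ (iUnion_subset fun b => ((hF b).2.2.2.2.2.2 n).1) q hn hqc
  choose i hi using fun y : B => mem_iUnion.1 (hBs y.2)
  have : Countable B := hBc.to_subtype
  obtain ⟨γ, hγ⟩ := exists_forall_lt_of_countable hΩ (countable_range i)
  refine (hF γ).2.2.2.2.1 q (hqH γ) (closure_mono (fun y hy => ?_) hqB)
  simp only [mem_iUnion]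
  exact ⟨i ⟨y, hy⟩, hγ _ (mem_range_self _), n, hi ⟨y, hy⟩⟩

theorem exists_mem_closure_mk_le_continuum {X : Type u} [TopologicalSpace X] [CompactSpace X]
    [T2Space X] {K c : Set X} (hK : IsGδ K) (hc : c.Countable) (hKc : K ⊆ closure c) {d : X}
    (hdK : d ∈ K) {D : Set X} (hD : Dense D) :
    ∃ s ⊆ D, #s ≤ Cardinal.continuum ∧ d ∈ closure s := by
  classical
  obtain ⟨V, hVo, hV⟩ := hK.eq_iInter_nat
  let P : Set (Set X) := range V ∪ ((fun b : Set c => (closure (Subtype.val '' b))ᶜ) ''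
    {b | d ∉ closure (Subtype.val '' b)})
  have hP : #P ≤ Cardinal.continuum := by
    refine (mk_union_le _ _).trans (add_le_of_le aleph0_le_continuum ?_ ?_)
    · exact ((mk_le_aleph0_iff.2 (countable_range V).to_subtype)).trans aleph0_le_continuum
    · refine mk_image_le.trans ((mk_set_le _).trans ?_)
      rw [mk_set, ← two_power_aleph0]
      exact power_le_power_left two_ne_zero (mk_le_aleph0_iff.2 hc.to_subtype)
  have hPo : ∀ U ∈ P, IsOpen U ∧ d ∈ U := by
    rintro _ (⟨n, rfl⟩ | ⟨b, hb, rfl⟩)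
    · exact ⟨hVo n, mem_iInter.1 (hV ▸ hdK) n⟩
    · exact ⟨isClosed_closure.isOpen_compl, hb⟩
  have hPd : ∀ y, (∀ U ∈ P, y ∈ U) → y = d := by
    intro y hy
    by_contra hyd
    obtain ⟨u, v, hu, hv, hyu, hdv, huv⟩ := t2_separation hyd
    have hyK : y ∈ K := hV ▸ mem_iInter.2 fun n => hy _ (Or.inl (mem_range_self n))
    have h1 : y ∈ closure (u ∩ c) := hu.inter_closure ⟨hyu, hKc hyK⟩
    have h2 : (Subtype.val '' (Subtype.val ⁻¹' u : Set c)) = u ∩ c := by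
      rw [Subtype.image_preimage_coe, inter_comm]
    have h3 : d ∉ closure (u ∩ c) := fun h =>
      (disjoint_left.1 (huv.closure_left hv)) (closure_mono inter_subset_left h) hdv
    refine hy _ (Or.inr ⟨Subtype.val ⁻¹' u, ?_, rfl⟩) ?_
    · change d ∉ _
      rwa [h2]
    · rwa [h2]
  have hL : ∀ U : P, ∃ L ∈ nhds d, IsClosed L ∧ L ⊆ U := fun U =>
    exists_mem_nhds_isClosed_subset ((hPo U U.2).1.mem_nhds (hPo U U.2).2)
  choose L hLd hLc hLU using hL
  have hs : ∀ t : Finset P, ∃ s ∈ D, ∀ U ∈ t, s ∈ L U := by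
    intro t
    obtain ⟨s, hs, hsD⟩ := hD.inter_open_nonempty (⋂ U ∈ t, interior (L U))
      (isOpen_biInter_finset fun _ _ => isOpen_interior)
      ⟨d, mem_iInter₂.2 fun U _ => mem_interior_iff_mem_nhds.2 (hLd U)⟩
    exact ⟨s, hsD, fun U hU => interior_subset (mem_iInter₂.1 hs U hU)⟩
  choose s hsD hsL using hs
  refine ⟨range s, ?_, mk_range_le.trans ?_, mem_closure_iff.2 fun U hU hdU => ?_⟩
  · rintro _ ⟨t, rfl⟩
    exact hsD t
  · rcases finite_or_infinite P with h | h
    · exact (mk_le_aleph0_iff.2 inferInstance).trans aleph0_le_continuum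
    · rwa [mk_finset_of_infinite]
  · obtain ⟨t, ht⟩ := hU.isClosed_compl.isCompact.elim_finite_subfamily_closed L hLc (by
      rw [eq_empty_iff_forall_notMem]
      rintro y ⟨hyU, hy⟩
      rw [mem_iInter] at hy
      exact hyU (hPd y (fun V hV => hLU ⟨V, hV⟩ (hy ⟨V, hV⟩)) ▸ hdU))
    refine ⟨s t, ?_, mem_range_self t⟩
    by_contra hst
    have : s t ∈ (∅ : Set X) := ht ▸ ⟨hst, mem_iInter₂.2 (hsL t)⟩
    exact this

theorem exists_countable_forall_finset_subset {I κ : Type*} [Countable κ]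
    (J : Finset (I × κ) → Set I) (hJ : ∀ s, (J s).Countable) :
    ∃ A : Set I, A.Countable ∧ {s : Finset (I × κ) | ∀ p ∈ s, p.1 ∈ A}.Countable ∧
      ∀ s, (∀ p ∈ s, p.1 ∈ A) → J s ⊆ A := by
  have hfin : ∀ A : Set I, A.Countable → {s : Finset (I × κ) | ∀ p ∈ s, p.1 ∈ A}.Countable := by
    intro A hA
    have h := Set.countable_ofPred_finite_subset (hA.prod (countable_univ (α := κ)))
    refine (h.preimage (f := fun s : Finset (I × κ) => (s : Set (I × κ)))
      Finset.coe_injective).mono fun s hs => ?_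
    exact ⟨s.finite_toSet, fun p hp => ⟨hs p hp, mem_univ _⟩⟩
  let A : ℕ → Set I := fun n => Nat.rec ∅ (fun _ B => B ∪ ⋃ s ∈ {s | ∀ p ∈ s, p.1 ∈ B}, J s) n
  have hA : ∀ n, A (n + 1) = A n ∪ ⋃ s ∈ {s | ∀ p ∈ s, p.1 ∈ A n}, J s := fun n => rfl
  have hmono : Monotone A := monotone_nat_of_le_succ fun n => hA n ▸ subset_union_left
  have hAc : ∀ n, (A n).Countable := by
    intro n
    induction n with
    | zero => exact countable_empty
    | succ n ih =>
      rw [hA]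
      exact ih.union ((hfin _ ih).biUnion fun s _ => hJ s)
  refine ⟨⋃ n, A n, countable_iUnion hAc, hfin _ (countable_iUnion hAc), fun s hs => ?_⟩
  have : ∀ p, ∃ n, p ∈ s → p.1 ∈ A n := by
    intro p
    by_cases hp : p ∈ s
    · obtain ⟨n, hn⟩ := mem_iUnion.1 (hs p hp)
      exact ⟨n, fun _ => hn⟩
    · exact ⟨0, fun h => absurd h hp⟩
  choose n hn using this
  refine Subset.trans ?_ (subset_iUnion A (s.sup n + 1))
  rw [hA]
  refine Subset.trans ?_ subset_union_right
  exact subset_biUnion_of_mem (u := J)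
    (show s ∈ {s : Finset (I × κ) | ∀ p ∈ s, p.1 ∈ A (s.sup n)} from fun p hp =>
      hmono (Finset.le_sup hp) (hn p hp))

/-- In a space with a homogeneous power and a point of countable π-character, every point is in the
closure of a countable set of points with a property holding on a `G_δ`-dense family. -/
theorem exists_countable_mem_closure_of_homogeneous_pi {X I : Type*} [TopologicalSpace X]
    [Nonempty I] (hI : ∀ x y : I → X, ∃ h : (I → X) ≃ₜ (I → X), h x = y) {e : X}
    (he : HasCountablePiBase e) {P : X → Prop}
    (hP : ∀ O : Set X, IsOpen O → O.Nonempty → ∃ K, IsGδ K ∧ K.Nonempty ∧ K ⊆ O ∧ ∀ d ∈ K, P d)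
    (y : X) : ∃ E : Set X, E.Countable ∧ (∀ x ∈ E, P x) ∧ y ∈ closure E := by
  classical
  obtain ⟨B, hB, hBe⟩ := he
  obtain ⟨h, hh⟩ := hI (fun _ => e) (fun _ => y)
  obtain ⟨i₀⟩ := ‹Nonempty I›
  let φ : (I → X) → X := fun x => h x i₀
  have hφ : Continuous φ := (continuous_apply i₀).comp h.continuous
  have hφo : IsOpenMap φ := (isOpenMap_eval i₀).comp h.isOpenMap
  have hφe : φ (fun _ => e) = y := congrFun hh i₀
  let O : Finset (I × ℕ) → Set (I → X) := fun s => {x | ∀ p ∈ s, x p.1 ∈ B p.2}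
  have hO : ∀ s, IsOpen (O s) := by
    intro s
    have : O s = ⋂ p ∈ s, (fun x : I → X => x p.1) ⁻¹' B p.2 := by
      ext x; simp [O]
    rw [this]
    exact isOpen_biInter_finset fun p _ => (hB p.2).1.preimage (continuous_apply _)
  have hx : ∀ s, ∃ (J : Set I) (x : I → X), J.Countable ∧
      ((O s).Nonempty → x ∈ O s ∧ (∀ i ∉ J, x i = e) ∧ P (φ x)) := by
    intro s
    by_cases hs : (O s).Nonempty
    · obtain ⟨K, hKg, ⟨_, hxK⟩, hKO, hKP⟩ := hP _ (hφo _ (hO s)) (hs.image φ)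
      obtain ⟨x, hxO, rfl⟩ := hKO hxK
      obtain ⟨V, hVo, hV⟩ := hKg.eq_iInter_nat
      have hxV : ∀ n, φ x ∈ V n := fun n => mem_iInter.1 (hV ▸ hxK) n
      choose S u hu huV using fun n => isOpen_pi_iff.1 ((hVo n).preimage hφ) x (hxV n)
      let J : Set I := (⋃ n, (S n : Set I)) ∪ Prod.fst '' (s : Set (I × ℕ))
      let x' : I → X := fun i => if i ∈ J then x i else e
      have hx' : ∀ i ∈ J, x' i = x i := fun i hi => if_pos hi
      refine ⟨J, x', (countable_iUnion fun n => (S n).countable_toSet).union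
        (s.countable_toSet.image _), fun _ => ⟨fun p hp => ?_, fun i hi => if_neg hi, hKP _ ?_⟩⟩
      · rw [hx' _ (Or.inr (mem_image_of_mem _ hp))]
        exact hxO p hp
      · rw [hV]
        refine mem_iInter.2 fun n => huV n fun i hi => ?_
        rw [hx' _ (Or.inl (mem_iUnion.2 ⟨n, hi⟩))]
        exact (hu n i hi).2
    · exact ⟨∅, fun _ => e, countable_empty, fun h => absurd h hs⟩
  choose J x hJ hx using hx
  obtain ⟨A, -, hAs, hAJ⟩ := exists_countable_forall_finset_subset J hJ
  refine ⟨(fun s => φ (x s)) '' {s | (∀ p ∈ s, p.1 ∈ A) ∧ (O s).Nonempty},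
    (hAs.mono fun s hs => hs.1).image _, ?_, mem_closure_iff.2 fun U hU hyU => ?_⟩
  · rintro _ ⟨s, hs, rfl⟩
    exact (hx s hs.2).2.2
  · obtain ⟨G, N, hN, hNU⟩ := isOpen_pi_iff.1 (hU.preimage hφ) (fun _ => e)
      (show φ _ ∈ U from hφe ▸ hyU)
    have : ∀ i, ∃ k, i ∈ G → B k ⊆ N i := by
      intro i
      by_cases hi : i ∈ G
      · obtain ⟨k, hk⟩ := hBe (N i) (hN i hi).1 (hN i hi).2
        exact ⟨k, fun _ => hk⟩
      · exact ⟨0, fun h => absurd h hi⟩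
    choose k hk using this
    let s : Finset (I × ℕ) := {i ∈ G | i ∈ A}.image fun i => (i, k i)
    have hsA : ∀ p ∈ s, p.1 ∈ A := by
      simp only [s, Finset.forall_mem_image]
      exact fun i hi => (Finset.mem_filter.1 hi).2
    have hsO : (O s).Nonempty := by
      refine ⟨fun i => (hB (k i)).2.some, ?_⟩
      change ∀ p ∈ s, _
      simp only [s, Finset.forall_mem_image]
      exact fun i _ => (hB (k i)).2.some_mem
    obtain ⟨h1, h2, -⟩ := hx s hsO
    refine ⟨_, hNU fun i hi => ?_, mem_image_of_mem _ ⟨hsA, hsO⟩⟩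
    by_cases hiA : i ∈ A
    · exact hk i hi (h1 (i, k i) (Finset.mem_image_of_mem _ (Finset.mem_filter.2 ⟨hi, hiA⟩)))
    · rw [h2 i fun h => hiA (hAJ s hsA h)]
      exact (hN i hi).2

theorem mk_iUnion_le_continuum {α : Type u} {ι : Type*} [Countable ι] {S : ι → Set α}
    (hS : ∀ i, #(S i) ≤ Cardinal.continuum) : #(⋃ i, S i) ≤ Cardinal.continuum := by
  rw [← lift_le, lift_continuum]
  refine (mk_iUnion_le_sum_mk_lift).trans ?_
  refine (sum_le_sum _ (fun _ => Cardinal.continuum) hS).trans ?_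
  rw [sum_const]
  refine mul_le_of_le aleph0_le_continuum ?_ (by simp)
  exact (lift_le_aleph0.2 (mk_le_aleph0 (α := ι))).trans aleph0_le_continuum

/-- Closing off under a set-valued function of sequences with values of size at most continuum. -/
theorem exists_mk_le_continuum_closed {X : Type u} [Nonempty X] (Φ : (ℕ → X) → Set X)
    (hΦ : ∀ s, #(Φ s) ≤ Cardinal.continuum) :
    ∃ A : Set X, A.Nonempty ∧ #A ≤ Cardinal.continuum ∧
      ∀ s : ℕ → X, (∀ n, s n ∈ A) → Φ s ⊆ A := by
  classical
  let K : Type u := Cardinal.continuum.{u}.out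
  have hK : #K = Cardinal.continuum := mk_out _
  have he : ∀ s, ∃ e : K → X, Φ s ⊆ range e := by
    intro s
    obtain ⟨j⟩ : Nonempty (Φ s ↪ K) := by
      rw [← Cardinal.le_def, hK]
      exact hΦ s
    obtain ⟨x₀⟩ := ‹Nonempty X›
    refine ⟨Function.extend j Subtype.val fun _ => x₀, fun y hy => ⟨j ⟨y, hy⟩, ?_⟩⟩
    exact j.injective.extend_apply _ _ _
  choose e he using he
  obtain ⟨x₀⟩ := ‹Nonempty X›
  let β : Option K → Type := fun o => o.elim Empty fun _ => ℕ
  let ev : WType β → X := WType.elim X fun p => match p with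
    | ⟨none, _⟩ => x₀
    | ⟨some k, f⟩ => e f k
  have hW : #(WType β) ≤ Cardinal.continuum := by
    refine WType.cardinalMk_le_of_le' ?_
    refine (sum_le_sum _ (fun _ => Cardinal.continuum) fun o => ?_).trans ?_
    · cases o with
      | none => simpa [β] using one_le_aleph0.trans aleph0_le_continuum
      | some k => simp [β]
    · rw [sum_const, lift_id, lift_id]
      refine mul_le_of_le aleph0_le_continuum ?_ le_rfl
      simp [hK, add_one_eq aleph0_le_continuum]
  refine ⟨range ev, range_nonempty_iff_nonempty.2 ⟨⟨none, fun a => a.elim⟩⟩, mk_range_le.trans hW,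
    fun s hs y hy => ?_⟩
  choose v hv using hs
  obtain ⟨k, rfl⟩ := he s hy
  refine ⟨⟨some k, v⟩, ?_⟩
  change e (fun n => ev (v n)) k = e s k
  rw [funext hv]

theorem exists_mk_le_continuum_closure_subset {X : Type u} [TopologicalSpace X] [CompactSpace X]
    [T2Space X] {w : X → ℕ → Set X} (hw : ∀ x n, IsOpen (w x n) ∧ x ∈ w x n) {c : Set X}
    (hc : c.Countable) :
    ∃ Y : Set X, #Y ≤ Cardinal.continuum ∧ closure c ⊆ ⋃ x ∈ Y, ⋂ n, w x n := by
  have hb : ∀ x n, ∃ b : Set c, x ∉ closure (Subtype.val '' b) ∧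
      ∀ z ∈ closure c, z ∉ closure (Subtype.val '' b) → z ∈ w x n := by
    intro x n
    obtain ⟨L, hLx, hLc, hLw⟩ := exists_mem_nhds_isClosed_subset ((hw x n).1.mem_nhds (hw x n).2)
    have hbL : (Subtype.val '' (Subtype.val ⁻¹' Lᶜ : Set c)) = c ∩ Lᶜ :=
      Subtype.image_preimage_coe _ _
    refine ⟨Subtype.val ⁻¹' Lᶜ, ?_, fun z hz hzb => ?_⟩
    · rw [hbL, mem_closure_iff_nhds]
      intro h
      obtain ⟨z, hzL, -, hz⟩ := h L hLx
      exact hz hzL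
    · rw [hbL] at hzb
      rw [← inter_union_compl c L, closure_union] at hz
      exact hLw (closure_minimal inter_subset_right hLc (hz.resolve_right hzb))
  choose b hb hbw using hb
  obtain ⟨Y, -, hY⟩ := exists_subset_bijOn (closure c) b
  refine ⟨Y, (mk_le_of_injective (injOn_iff_injective.1 hY.injOn)).trans ?_, fun z hz => ?_⟩
  · have : #(Set c) ≤ Cardinal.continuum := by
      rw [mk_set, ← two_power_aleph0]
      exact power_le_power_left two_ne_zero (mk_le_aleph0_iff.2 hc.to_subtype)
    calc #(ℕ → Set c) = #(Set c) ^ ℵ₀ := by simp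
      _ ≤ Cardinal.continuum ^ ℵ₀ := power_le_power_right this
      _ = Cardinal.continuum := continuum_power_aleph0
  · obtain ⟨x, hxY, hxz⟩ := hY.surjOn (mem_image_of_mem b hz)
    refine mem_biUnion hxY (mem_iInter.2 fun n => hbw x n z hz ?_)
    rw [hxz]
    exact hb z n

/-- A choice of a `G_δ` neighbourhood at each point has a subcover of size continuum. -/
theorem exists_mk_le_continuum_iUnion_eq_univ {X : Type u} [TopologicalSpace X] [CompactSpace X]
    [T2Space X] {C : ℕ → Set X} (hcov : ⋃ n, C n = Set.univ)
    (hC : ∀ n, CountablyTightSet (C n))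
    (hgood : ∀ x n, ∃ c ⊆ C n, #c ≤ Cardinal.continuum ∧ x ∈ closure c)
    {w : X → ℕ → Set X} (hw : ∀ x n, IsOpen (w x n) ∧ x ∈ w x n) :
    ∃ A : Set X, #A ≤ Cardinal.continuum ∧ ⋃ x ∈ A, ⋂ n, w x n = Set.univ := by
  classical
  rcases isEmpty_or_nonempty X with hX | hX
  · exact ⟨∅, by simp, Subsingleton.elim _ _⟩
  choose c hcC hcc hcx using hgood
  have hY : ∀ s : ℕ → X, ∃ Y : Set X, #Y ≤ Cardinal.continuum ∧
      closure (range s) ⊆ ⋃ x ∈ Y, ⋂ n, w x n := fun s =>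
    exists_mk_le_continuum_closure_subset hw (countable_range s)
  choose Y hYc hY using hY
  have hpt : ∀ (s : ℕ → X) (f : ℕ → ℕ), ∃ p, (∃ q, ∀ i, q ∉ w (s i) (f i)) →
      ∀ i, p ∉ w (s i) (f i) := by
    intro s f
    by_cases h : ∃ q, ∀ i, q ∉ w (s i) (f i)
    · exact ⟨h.choose, fun _ => h.choose_spec⟩
    · exact ⟨Classical.arbitrary X, fun h' => absurd h' h⟩
  choose pt hpt using hpt
  obtain ⟨A, hAne, hAc, hA⟩ := exists_mk_le_continuum_closed
    (fun s => (Y s ∪ ⋃ p : ℕ × ℕ, c (s p.1) p.2) ∪ range (pt s)) (by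
      intro s
      refine (mk_union_le _ _).trans (add_le_of_le aleph0_le_continuum
        ((mk_union_le _ _).trans (add_le_of_le aleph0_le_continuum (hYc s)
          (mk_iUnion_le_continuum fun p => hcc _ _))) ?_)
      rw [← lift_id #(range (pt s))]
      simpa using mk_range_le_lift (f := pt s))
  have hAcl : closure A ⊆ ⋃ x ∈ A, ⋂ n, w x n := by
    intro q hq
    obtain ⟨n, hn⟩ := mem_iUnion.1 (hcov.ge (mem_univ q))
    have hAC : A ⊆ closure (A ∩ C n) := by
      intro x hx
      refine closure_mono (subset_inter ?_ (hcC x n)) (hcx x n)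
      intro y hy
      exact hA (fun _ => x) (fun _ => hx) (Or.inl (Or.inr (mem_iUnion.2 ⟨(0, n), hy⟩)))
    obtain ⟨B, hBA, hBc, hqB⟩ := hC n (A ∩ C n) inter_subset_right q hn
      (closure_minimal hAC isClosed_closure hq)
    obtain ⟨s, rfl⟩ := hBc.exists_eq_range (closure_nonempty_iff.1 ⟨q, hqB⟩)
    obtain ⟨x, hx, hqx⟩ := mem_iUnion₂.1 (hY s hqB)
    exact mem_biUnion (hA s (fun n => (hBA (mem_range_self n)).1) (Or.inl (Or.inl hx))) hqx
  refine ⟨A, hAc, eq_univ_of_forall fun p => ?_⟩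
  by_contra hp
  have : ∀ x, ∃ n, x ∈ A → p ∉ w x n := by
    intro x
    by_contra! h
    exact hp (mem_biUnion (h 0).1 (mem_iInter.2 fun n => (h n).2))
  choose n hn using this
  obtain ⟨t, ht⟩ := (isClosed_closure (s := A)).isCompact.elim_finite_subcover
    (fun x : A => w x (n x)) (fun x => (hw _ _).1) fun q hq => by
      obtain ⟨x, hx, hqx⟩ := mem_iUnion₂.1 (hAcl hq)
      exact mem_iUnion.2 ⟨⟨x, hx⟩, mem_iInter.1 hqx _⟩
  have htne : Nonempty t := by
    obtain ⟨a, ha⟩ := hAne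
    obtain ⟨x, hx, -⟩ := mem_iUnion₂.1 (ht (subset_closure ha))
    exact ⟨⟨x, hx⟩⟩
  obtain ⟨e, he⟩ := exists_surjective_nat t
  let s : ℕ → X := fun i => ((e i : A) : X)
  have hs : ∀ i, s i ∈ A := fun i => (e i : A).2
  have hmem : pt s (fun i => n (s i)) ∈ A := hA s hs (Or.inr (mem_range_self _))
  obtain ⟨x, hx, hxp⟩ := mem_iUnion₂.1 (ht (subset_closure hmem))
  obtain ⟨i, hi⟩ := he ⟨x, hx⟩
  have hsx : s i = x := by simp [s, hi]
  exact hpt s (fun i => n (s i)) ⟨p, fun j => hn _ (hs j)⟩ i (by rwa [hsx])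

/-- Open sets of the `G_δ`-modification contain a `G_δ` set around each of their points. -/
theorem exists_iInter_subset_of_generateOpen {X : Type*} [TopologicalSpace X] {U : Set X}
    (hU : GenerateOpen {G : Set X | ∃ 𝒰 : Set (Set X), 𝒰.Countable ∧ (∀ U ∈ 𝒰, IsOpen U) ∧
      G = ⋂₀ 𝒰} U) {x : X} (hx : x ∈ U) :
    ∃ w : ℕ → Set X, (∀ n, IsOpen (w n) ∧ x ∈ w n) ∧ ⋂ n, w n ⊆ U := by
  induction hU with
  | basic s hs =>
    obtain ⟨𝒰, hc, ho, rfl⟩ := hs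
    obtain ⟨w, hw⟩ := (hc.insert Set.univ).exists_eq_range (insert_nonempty _ _)
    have hmem : ∀ n, w n ∈ insert Set.univ 𝒰 := fun n => hw ▸ mem_range_self n
    refine ⟨w, fun n => ?_, fun y hy V hV => ?_⟩
    · rcases hmem n with h | h
      · rw [h]
        exact ⟨isOpen_univ, mem_univ x⟩
      · exact ⟨ho _ h, hx _ h⟩
    · obtain ⟨n, rfl⟩ : V ∈ range w := hw ▸ mem_insert_of_mem _ hV
      exact mem_iInter.1 hy n
  | univ => exact ⟨fun _ => Set.univ, fun _ => ⟨isOpen_univ, mem_univ x⟩, subset_univ _⟩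
  | inter s t _ _ ihs iht =>
    obtain ⟨w, hw, hws⟩ := ihs hx.1
    obtain ⟨v, hv, hvt⟩ := iht hx.2
    refine ⟨fun n => w n ∩ v n, fun n => ⟨(hw n).1.inter (hv n).1, (hw n).2, (hv n).2⟩, ?_⟩
    rw [iInter_inter_distrib]
    exact inter_subset_inter hws hvt
  | sUnion S _ ih =>
    obtain ⟨s, hs, hxs⟩ := hx
    obtain ⟨w, hw, hws⟩ := ih s hs hxs
    exact ⟨w, hw, hws.trans (subset_sUnion_of_mem hs)⟩

theorem countablyTightSet_of_tightness_le {X : Type u} [TopologicalSpace X] {C : Set X}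
    (hC : tightness ↥C ≤ ℵ₀) : CountablyTightSet C := by
  intro A hA x hx hxA
  have hne : {κ : Cardinal.{u} | ℵ₀ ≤ κ ∧ ∀ (A : Set C) (x : C), x ∈ closure A →
      ∃ B ⊆ A, #B ≤ κ ∧ x ∈ closure B}.Nonempty :=
    ⟨max ℵ₀ #C, le_max_left _ _, fun A _ hx =>
      ⟨A, Subset.rfl, (mk_set_le A).trans (le_max_right _ _), hx⟩⟩
  have hx' : (⟨x, hx⟩ : C) ∈ closure (Subtype.val ⁻¹' A : Set C) := by
    rwa [closure_subtype, Subtype.image_preimage_coe, inter_eq_right.2 hA]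
  obtain ⟨B, hBA, hBc, hxB⟩ := (csInf_mem hne).2 _ _ hx'
  exact ⟨Subtype.val '' B, image_subset_iff.2 hBA,
    (mk_le_aleph0_iff.1 (hBc.trans hC)).to_set.image _, closure_subtype.1 hxB⟩

/-- Theorem 4.7: `L(X_δ) ≤ 𝔠` for power homogeneous compacta that are
countable unions of countably tight dense subspaces. -/
theorem stmt18 {X : Type u} [TopologicalSpace X] [CompactSpace X] [T2Space X]
    (hph : PowerHomogeneous X) (C : ℕ → Set X) (hcov : ⋃ n, C n = Set.univ)
    (hct : ∀ n, tightness ↥(C n) ≤ ℵ₀) (hd : ∀ n, Dense (C n)) :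
    @LindelofNumber X (generateFrom
      {G : Set X | ∃ 𝒰 : Set (Set X), 𝒰.Countable ∧ (∀ U ∈ 𝒰, IsOpen U) ∧ G = ⋂₀ 𝒰}) ≤
      Cardinal.continuum := by
  have hC : ∀ n, CountablyTightSet (C n) := fun n => countablyTightSet_of_tightness_le (hct n)
  obtain ⟨I, hI, hhom⟩ := hph
  have hgood : ∀ x n, ∃ c ⊆ C n, #c ≤ Cardinal.continuum ∧ x ∈ closure c := by
    intro x n
    have : Nonempty X := ⟨x⟩
    obtain ⟨e, he⟩ := exists_hasCountablePiBase hcov hC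
    obtain ⟨E, hEc, hE, hxE⟩ := exists_countable_mem_closure_of_homogeneous_pi hhom he
      (P := fun d => ∃ c ⊆ C n, #c ≤ Cardinal.continuum ∧ d ∈ closure c) (fun O hO hne => by
        obtain ⟨K, c, hK, -, hKg, hKO, hc, hKc⟩ :=
          exists_isGδ_subset_closure_countable hcov hC hd hO hne
        exact ⟨K, hKg, hK, hKO, fun d hdK =>
          exists_mem_closure_mk_le_continuum hKg hc hKc hdK (hd n)⟩) x
    choose c hcC hcc hxc using fun d : E => hE d d.2
    have : Countable E := hEc.to_subtype
    refine ⟨⋃ d, c d, iUnion_subset hcC, mk_iUnion_le_continuum hcc, ?_⟩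
    exact closure_minimal (fun d hdE => closure_mono (subset_iUnion c ⟨d, hdE⟩) (hxc ⟨d, hdE⟩))
      isClosed_closure hxE
  refine csInf_le' ⟨aleph0_le_continuum, fun 𝒰 h𝒰 hcover => ?_⟩
  have hmem : ∀ x : X, ∃ U ∈ 𝒰, x ∈ U := fun x => mem_sUnion.1 (hcover.ge (mem_univ x))
  choose U hU hxU using hmem
  choose w hw hwU using fun x => exists_iInter_subset_of_generateOpen (h𝒰 (U x) (hU x)) (hxU x)
  obtain ⟨A, hA, hAcov⟩ := exists_mk_le_continuum_iUnion_eq_univ hcov hC hgood hw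
  refine ⟨U '' A, image_subset_iff.2 fun x _ => hU x, mk_image_le.trans hA,
    eq_univ_of_forall fun p => ?_⟩
  obtain ⟨x, hxA, hpx⟩ := mem_iUnion₂.1 (hAcov.ge (mem_univ p))
  exact ⟨U x, mem_image_of_mem U hxA, hwU x hpx⟩
end

section
/- Every compactum X that is the union of countably many countably tight subspaces contains, inside every non-empty open set, a point x and a closed subset F with x ∈ F such that πχ(x,F) ≤ ω; consequently every non-empty closed subspace F of such an X has a point of countable π-character in F. -/
open Cardinal Set TopologicalSpace

universe u

/-! ### Countable tightness inside an ambient space -/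

/-- A subset `C` is countably tight, phrased with closures taken in the ambient space. -/
def CountablyTightIn {X : Type u} [TopologicalSpace X] (C : Set X) : Prop :=
  ∀ A ⊆ C, ∀ x ∈ C, x ∈ closure A → ∃ B ⊆ A, B.Countable ∧ x ∈ closure B

theorem CountablyTightIn.of_tightness_le {X : Type u} [TopologicalSpace X] {C : Set X}
    (h : tightness ↥C ≤ ℵ₀) : CountablyTightIn C := by
  intro A hA x hx hxA
  have hmem := csInf_mem (s := {κ : Cardinal.{u} | ℵ₀ ≤ κ ∧ ∀ (A : Set C) (x : C),
    x ∈ closure A → ∃ B ⊆ A, #B ≤ κ ∧ x ∈ closure B})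
    ⟨max ℵ₀ #C, le_max_left _ _, fun A x hx =>
      ⟨A, subset_rfl, (mk_set_le A).trans (le_max_right _ _), hx⟩⟩
  have himg : ((↑) : C → X) '' ((↑) ⁻¹' A) = A := by
    rw [Subtype.image_preimage_coe]
    exact inter_eq_right.2 hA
  obtain ⟨B, hBA, hB, hxB⟩ := hmem.2 ((↑) ⁻¹' A) ⟨x, hx⟩ (by
    rw [closure_subtype, himg]
    exact hxA)
  refine ⟨(↑) '' B, ?_, ?_, closure_subtype.1 hxB⟩
  · rw [← himg]
    exact image_mono hBA
  · exact (Cardinal.mk_le_aleph0_iff.1 (hB.trans h) : Countable B).to_set.image _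

theorem CountablyTightIn.preimage_coe {X : Type u} [TopologicalSpace X] {C : Set X}
    (h : CountablyTightIn C) (F : Set X) : CountablyTightIn (((↑) : F → X) ⁻¹' C) := by
  intro A hA x hx hxA
  obtain ⟨B, hBA, hB, hxB⟩ := h ((↑) '' A) (image_subset_iff.2 hA) x hx (closure_subtype.1 hxA)
  have himg : ((↑) : F → X) '' ((↑) ⁻¹' B) = B := by
    rw [Subtype.image_preimage_coe]
    exact inter_eq_right.2 (hBA.trans (by rintro _ ⟨y, -, rfl⟩; exact y.2))
  refine ⟨(↑) ⁻¹' B, ?_, hB.preimage Subtype.val_injective, ?_⟩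
  · intro y hy
    obtain ⟨z, hz, hzy⟩ := hBA hy
    rwa [← Subtype.ext hzy]
  · rw [closure_subtype, himg]
    exact hxB

/-! ### Compacta mapping onto an uncountable Cantor cube -/

section CantorCube

variable {Y : Type*} {ι : Type*}

/-- The points whose image under `Φ` lies in the `Σ`-product with base point `y`. -/
def sigmaPreimage (Φ : Y → ι → Bool) (y : ι → Bool) : Set Y :=
  {x | {i | Φ x i ≠ y i}.Countable}

variable [TopologicalSpace Y]

/-- `H` is closed and `Φ` maps it onto a subcube obtained by fixing countably many coordinates. -/
def MapsOntoSubcube (Φ : Y → ι → Bool) (H : Set Y) : Prop :=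
  IsClosed H ∧ ∃ (a : Set ι) (z : ι → Bool), a.Countable ∧ Φ '' H = {w | ∀ i ∈ a, w i = z i}

theorem MapsOntoSubcube.inter_sigmaPreimage_nonempty {Φ : Y → ι → Bool} {H : Set Y}
    (h : MapsOntoSubcube Φ H) (y : ι → Bool) : (H ∩ sigmaPreimage Φ y).Nonempty := by
  classical
  obtain ⟨-, a, z, ha, hH⟩ := h
  have hw : (fun i => if i ∈ a then z i else y i) ∈ Φ '' H := by
    rw [hH]
    intro i hi
    simp [hi]
  obtain ⟨x, hx, hxw⟩ := hw
  refine ⟨x, hx, ha.mono fun i hi => ?_⟩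
  by_contra hia
  exact hi (by simp [hxw, hia])

theorem MapsOntoSubcube.iInter [CompactSpace Y] {Φ : Y → ι → Bool} (hΦ : Continuous Φ)
    {H : ℕ → Set Y} (hanti : Antitone H) (h : ∀ n, MapsOntoSubcube Φ (H n)) :
    MapsOntoSubcube Φ (⋂ n, H n) := by
  have hcl : ∀ n, IsClosed (H n) := fun n => (h n).1
  choose a z ha hz using fun n => (h n).2
  have hne : ∀ n, (H n).Nonempty := fun n => by
    rw [← image_nonempty (f := Φ), hz n]
    exact ⟨z n, fun _ _ => rfl⟩
  have hfib : ∀ w, (∀ n, w ∈ Φ '' H n) → w ∈ Φ '' ⋂ n, H n := by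
    intro w hw
    have hclw : IsClosed (Φ ⁻¹' {w}) := isClosed_singleton.preimage hΦ
    obtain ⟨x, hx⟩ := IsCompact.nonempty_iInter_of_sequence_nonempty_isCompact_isClosed
      (fun n => H n ∩ Φ ⁻¹' {w})
      (fun n => inter_subset_inter_left _ (hanti n.le_succ))
      (fun n => by obtain ⟨x, hx, hxw⟩ := hw n; exact ⟨x, hx, hxw⟩)
      ((hcl 0).inter hclw).isCompact
      (fun n => (hcl n).inter hclw)
    rw [mem_iInter] at hx
    exact ⟨x, mem_iInter.2 fun n => (hx n).1, (hx 0).2⟩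
  obtain ⟨x, hx⟩ := IsCompact.nonempty_iInter_of_sequence_nonempty_isCompact_isClosed H
    (fun n => hanti n.le_succ) hne (hcl 0).isCompact hcl
  rw [mem_iInter] at hx
  have hxz : ∀ n, ∀ i ∈ a n, Φ x i = z n i := fun n => by
    have := mem_image_of_mem Φ (hx n)
    rwa [hz n] at this
  refine ⟨isClosed_iInter hcl, ⋃ n, a n, Φ x, countable_iUnion ha, Subset.antisymm ?_ ?_⟩
  · rintro _ ⟨y, hy, rfl⟩ i hi
    obtain ⟨n, hn⟩ := mem_iUnion.1 hi
    have := mem_image_of_mem Φ (mem_iInter.1 hy n)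
    rw [hz n] at this
    rw [this i hn, hxz n i hn]
  · intro w hw
    refine hfib w fun n => ?_
    rw [hz n]
    intro i hi
    rw [hw i (mem_iUnion.2 ⟨n, hi⟩), hxz n i hi]

/-- Countably many hereditary requirements, each of which can be met by shrinking, can be met
simultaneously. -/
theorem MapsOntoSubcube.exists_subset_forall [CompactSpace Y] {Φ : Y → ι → Bool}
    (hΦ : Continuous Φ) {R : ℕ → Set Y → Prop}
    (hR : ∀ n, ∀ F H, H ⊆ F → R n F → R n H) {F : Set Y} (hF : MapsOntoSubcube Φ F)
    (hstep : ∀ n, ∀ F' ⊆ F, MapsOntoSubcube Φ F' → ∃ H ⊆ F', MapsOntoSubcube Φ H ∧ R n H) :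
    ∃ H ⊆ F, MapsOntoSubcube Φ H ∧ ∀ n, R n H := by
  choose! g hgF hg hgR using hstep
  let G : ℕ → Set Y := fun n => Nat.rec F (fun n K => g n K) n
  have hG : ∀ n, G n ⊆ F ∧ MapsOntoSubcube Φ (G n) := by
    intro n
    induction n with
    | zero => exact ⟨subset_rfl, hF⟩
    | succ n ih => exact ⟨(hgF n _ ih.1 ih.2).trans ih.1, hg n _ ih.1 ih.2⟩
  have hanti : Antitone G := antitone_nat_of_succ_le fun n => hgF n _ (hG n).1 (hG n).2
  exact ⟨⋂ n, G n, iInter_subset G 0, .iInter hΦ hanti fun n => (hG n).2, fun n =>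
    hR n _ _ (iInter_subset G (n + 1)) (hgR n _ (hG n).1 (hG n).2)⟩

/-- A countably tight set can be removed from a `Σ`-product, or confined to it. -/
theorem MapsOntoSubcube.exists_disjoint_or_subset {Φ : Y → ι → Bool} [CompactSpace Y]
    (hΦ : Continuous Φ) {C : Set Y} (hC : CountablyTightIn C) {F : Set Y}
    (hF : MapsOntoSubcube Φ F) (y : ι → Bool) :
    (∃ H ⊆ F, MapsOntoSubcube Φ H ∧ H ∩ C ∩ sigmaPreimage Φ y = ∅) ∨
      ∃ H ⊆ F, MapsOntoSubcube Φ H ∧ H ∩ C ⊆ sigmaPreimage Φ y := by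
  classical
  obtain ⟨hFc, a, z, ha, hz⟩ := hF
  set A := F ∩ C ∩ sigmaPreimage Φ y with hA
  have hAF : closure A ⊆ F := closure_minimal (fun x hx => hx.1.1) hFc
  by_cases hfull : {w | ∀ i ∈ a, w i = z i} ⊆ Φ '' closure A
  · refine Or.inr ⟨closure A, hAF, ⟨isClosed_closure, a, z, ha,
      Subset.antisymm (hz ▸ image_mono hAF) hfull⟩, ?_⟩
    rintro x ⟨hxA, hxC⟩
    obtain ⟨B, hBA, hB, hxB⟩ := hC A (fun x hx => hx.1.2) x hxC hxA
    refine (hB.biUnion fun b hb => (hBA hb).2 : (⋃ b ∈ B, {i | Φ b i ≠ y i}).Countable).mono ?_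
    intro i hi
    by_contra hib
    simp only [mem_iUnion, not_exists, mem_ofPred_eq, not_not] at hib
    have hcl : IsClosed {x | Φ x i = y i} :=
      isClosed_singleton.preimage ((continuous_apply i).comp hΦ)
    exact hi (closure_minimal (fun b hb => hib b hb) hcl hxB)
  · obtain ⟨w, hwz, hw⟩ := not_subset.1 hfull
    have hopen : IsOpen (Φ '' closure A)ᶜ :=
      (isClosed_closure.isCompact.image hΦ).isClosed.isOpen_compl
    obtain ⟨b, u, hu, hub⟩ := isOpen_pi_iff.1 hopen w hw
    have hcl : IsClosed {x | ∀ i ∈ a ∪ ↑b, Φ x i = w i} := by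
      simp only [ofPred_forall]
      exact isClosed_biInter fun i _ =>
        isClosed_singleton.preimage ((continuous_apply i).comp hΦ)
    refine Or.inl ⟨F ∩ {x | ∀ i ∈ a ∪ ↑b, Φ x i = w i}, inter_subset_left,
      ⟨hFc.inter hcl, a ∪ ↑b, w, ha.union b.countable_toSet, Subset.antisymm ?_ ?_⟩, ?_⟩
    · rintro _ ⟨x, hx, rfl⟩
      exact hx.2
    · intro v hv
      have hvF : v ∈ Φ '' F := by
        rw [hz]
        intro i hi
        rw [hv i (Or.inl hi), hwz i hi]
      obtain ⟨x, hx, rfl⟩ := hvF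
      exact ⟨x, ⟨hx, hv⟩, rfl⟩
    · rw [eq_empty_iff_forall_notMem]
      rintro x ⟨⟨⟨hxF, hxw⟩, hxC⟩, hxy⟩
      refine hub (a := Φ x) ?_ ⟨x, subset_closure ⟨⟨hxF, hxC⟩, hxy⟩, rfl⟩
      intro i hi
      rw [hxw i (Or.inr hi)]
      exact (hu i hi).2

/-- Given countably many points of an uncountable Cantor cube, some point lies in none of their
`Σ`-products. -/
theorem exists_forall_uncountable_ne [Uncountable ι] (y : ℕ → ι → Bool) :
    ∃ w : ι → Bool, ∀ n, ¬ {i | w i ≠ y n i}.Countable := by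
  have hcard : #(ι × ℕ) = #ι := by
    rw [mk_prod, mk_nat, lift_aleph0, lift_uzero]
    exact mul_eq_left (aleph0_le_mk ι) (aleph0_le_mk ι) aleph0_ne_zero
  obtain ⟨e⟩ := Cardinal.eq.1 hcard
  refine ⟨fun i => !y (e.symm i).2 i, fun n hn => ?_⟩
  have hinj : Function.Injective fun i => e (i, n) := fun i j hij => by
    simpa using e.injective hij
  have : (Set.univ : Set ι).Countable := (hn.preimage hinj).mono fun i _ => by simp
  exact not_countable (countable_univ_iff.1 this)

/-- A compactum covered by countably many countably tight subspaces does not map onto an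
uncountable Cantor cube. -/
theorem not_surjective_cantorCube [CompactSpace Y] [Uncountable ι] {Φ : Y → ι → Bool}
    (hΦ : Continuous Φ) {C : ℕ → Set Y} (hcov : ⋃ n, C n = Set.univ)
    (hC : ∀ n, CountablyTightIn (C n)) : ¬ Function.Surjective Φ := by
  intro hsurj
  have huniv : MapsOntoSubcube Φ Set.univ :=
    ⟨isClosed_univ, ∅, fun _ => true, countable_empty, by simp [hsurj.range_eq]⟩
  obtain ⟨F, -, hF, hFR⟩ := MapsOntoSubcube.exists_subset_forall hΦ
    (R := fun n H => (∃ y, H ∩ C n ⊆ sigmaPreimage Φ y) ∨ ∀ y, ∀ F ⊆ H, MapsOntoSubcube Φ F →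
      ∃ K ⊆ F, MapsOntoSubcube Φ K ∧ K ∩ C n ∩ sigmaPreimage Φ y = ∅)
    (fun n F H hHF => Or.imp
      (fun ⟨y, hy⟩ => ⟨y, (inter_subset_inter_left _ hHF).trans hy⟩)
      (fun h y K hK => h y K (hK.trans hHF))) huniv
    (fun n F _ hF => by
      by_cases h : ∃ H ⊆ F, MapsOntoSubcube Φ H ∧ ∃ y, H ∩ C n ⊆ sigmaPreimage Φ y
      · obtain ⟨H, hHF, hH, hy⟩ := h
        exact ⟨H, hHF, hH, Or.inl hy⟩
      · refine ⟨F, subset_rfl, hF, Or.inr fun y K hKF hK => ?_⟩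
        refine (hK.exists_disjoint_or_subset hΦ (hC n) y).resolve_right ?_
        rintro ⟨H, hHK, hH, hy⟩
        exact h ⟨H, hHK.trans hKF, hH, y, hy⟩)
  have hex : ∀ n, ∃ y, F ∩ C n ⊆ sigmaPreimage Φ y ∨ ∀ y, ∀ H ⊆ F, MapsOntoSubcube Φ H →
      ∃ K ⊆ H, MapsOntoSubcube Φ K ∧ K ∩ C n ∩ sigmaPreimage Φ y = ∅ := fun n => by
    rcases hFR n with ⟨y, hy⟩ | h
    · exact ⟨y, Or.inl hy⟩
    · exact ⟨fun _ => true, Or.inr h⟩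
  choose y hy using hex
  obtain ⟨w, hw⟩ := exists_forall_uncountable_ne y
  obtain ⟨H, -, hH, hHR⟩ := MapsOntoSubcube.exists_subset_forall hΦ
    (R := fun n H => H ∩ C n ∩ sigmaPreimage Φ w = ∅)
    (fun n F H hHF h => subset_eq_empty
      (inter_subset_inter_left _ (inter_subset_inter_left _ hHF)) h) hF
    (fun n K hKF hK => by
      rcases hy n with h | h
      · refine ⟨K, subset_rfl, hK, eq_empty_iff_forall_notMem.2 ?_⟩
        rintro x ⟨⟨hxK, hxC⟩, hxw⟩
        refine hw n ((hxw.union (h ⟨hKF hxK, hxC⟩)).mono fun i hi => ?_)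
        by_contra hcon
        simp only [mem_union, mem_ofPred_eq, not_or, not_not] at hcon
        exact hi (hcon.1.symm.trans hcon.2)
      · exact h w K hKF hK)
  obtain ⟨x, hxH, hxw⟩ := hH.inter_sigmaPreimage_nonempty w
  obtain ⟨n, hn⟩ := mem_iUnion.1 (hcov.symm ▸ mem_univ x : x ∈ ⋃ n, C n)
  exact eq_empty_iff_forall_notMem.1 (hHR n) x ⟨⟨hxH, hn⟩, hxw⟩

end CantorCube

/-! ### Independent families of pairs of open sets -/

section Independent

variable {X : Type u}

/-- The Boolean combination inside `W` prescribing the first members of the pairs in `s` and the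
second members of the pairs in `t`. -/
def pairCombination (W : Set X) (s t : Finset (Set X × Set X)) : Set X :=
  W ∩ ((⋂ p ∈ s, p.1) ∩ ⋂ p ∈ t, p.2)

/-- All the Boolean combinations of the pairs in `𝓕` are non-empty inside `W`. -/
def IndependentIn (W : Set X) (𝓕 : Set (Set X × Set X)) : Prop :=
  ∀ s t : Finset (Set X × Set X), ↑s ⊆ 𝓕 → ↑t ⊆ 𝓕 → Disjoint s t →
    (pairCombination W s t).Nonempty

/-- The non-empty Boolean combinations inside `W` of the pairs in `𝓕`. -/
def pairCombinations (W : Set X) (𝓕 : Set (Set X × Set X)) : Set (Set X) :=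
  {V | V.Nonempty ∧ ∃ s t : Finset (Set X × Set X), ↑s ⊆ 𝓕 ∧ ↑t ⊆ 𝓕 ∧ pairCombination W s t = V}

theorem countable_pairCombinations (W : Set X) {𝓕 : Set (Set X × Set X)} (h : 𝓕.Countable) :
    (pairCombinations W 𝓕).Countable := by
  have hfin : {s : Finset (Set X × Set X) | ↑s ⊆ 𝓕}.Countable :=
    ((countable_ofPred_finite_subset h).preimage Finset.coe_injective).mono
      fun s hs => by exact ⟨s.finite_toSet, hs⟩
  refine ((hfin.prod hfin).image fun st => pairCombination W st.1 st.2).mono ?_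
  rintro V ⟨-, s, t, hs, ht, rfl⟩
  exact ⟨(s, t), ⟨hs, ht⟩, rfl⟩

variable [TopologicalSpace X]

/-- Both members of the pair are open, and their closures are disjoint. -/
def IsSeparatedPair (p : Set X × Set X) : Prop :=
  IsOpen p.1 ∧ IsOpen p.2 ∧ Disjoint (closure p.1) (closure p.2)

theorem isOpen_pairCombination {W : Set X} (hW : IsOpen W) {s t : Finset (Set X × Set X)}
    (hs : ∀ p ∈ s, IsSeparatedPair p) (ht : ∀ p ∈ t, IsSeparatedPair p) :
    IsOpen (pairCombination W s t) :=
  hW.inter ((isOpen_biInter_finset fun p hp => (hs p hp).1).inter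
    (isOpen_biInter_finset fun p hp => (ht p hp).2.1))

theorem exists_maximal_independentIn {W : Set X} (hW : W.Nonempty) :
    ∃ 𝓕, Maximal (fun 𝓕 => (∀ p ∈ 𝓕, IsSeparatedPair p) ∧ IndependentIn W 𝓕) 𝓕 := by
  have hempty : (∀ p ∈ (∅ : Set (Set X × Set X)), IsSeparatedPair p) ∧ IndependentIn W ∅ := by
    refine ⟨by simp, fun s t hs ht _ => ?_⟩
    rw [subset_empty_iff, Finset.coe_eq_empty] at hs ht
    simpa [pairCombination, hs, ht] using hW
  obtain ⟨𝓕, -, h⟩ := zorn_subset_nonempty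
    {𝓕 | (∀ p ∈ 𝓕, IsSeparatedPair p) ∧ IndependentIn W 𝓕} (fun c hc hchain hne => by
      refine ⟨⋃₀ c, ⟨?_, ?_⟩, fun s hs => subset_sUnion_of_mem hs⟩
      · rintro p ⟨𝓕, h𝓕, hp⟩
        exact (hc h𝓕).1 p hp
      · classical
        intro s t hs ht hst
        obtain ⟨𝓕, h𝓕, hsub⟩ := hchain.directedOn.exists_mem_subset_of_finset_subset_biUnion hne
          (s := s ∪ t) (f := id) (by
            rw [Finset.coe_union, union_subset_iff]
            simpa only [id, ← sUnion_eq_biUnion] using And.intro hs ht)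
        rw [Finset.coe_union, union_subset_iff] at hsub
        exact (hc h𝓕).2 s t hsub.1 hsub.2 hst) ∅ hempty
  exact ⟨𝓕, h⟩

/-- If no point has a countable local `π`-base then, below some member of a given countable family
of non-empty open sets, a single separated pair splits all the members of the family. -/
theorem exists_separatedPair_splitting [CompactSpace X] [T2Space X]
    (hπ : ∀ x : X, ¬ piCharPt x ≤ ℵ₀) {𝒱 : Set (Set X)} (hcount : 𝒱.Countable) (hne : 𝒱.Nonempty)
    (hV : ∀ V ∈ 𝒱, IsOpen V ∧ V.Nonempty) :
    ∃ V₀ ∈ 𝒱, ∃ p : Set X × Set X, IsSeparatedPair p ∧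
      ∀ V ∈ 𝒱, V ⊆ V₀ → (V ∩ p.1).Nonempty ∧ (V ∩ p.2).Nonempty := by
  have hnhds : ∀ x : X, ∃ p : Set X × Set X, IsSeparatedPair p ∧ x ∈ p.1 ∧
      ∀ V ∈ 𝒱, (V ∩ p.2).Nonempty := by
    intro x
    obtain ⟨O, hO, hxO, hOV⟩ : ∃ O : Set X, IsOpen O ∧ x ∈ O ∧ ∀ V ∈ 𝒱, ¬ V ⊆ O := by
      by_contra! hcon
      exact hπ x (csInf_le' ⟨𝒱, mk_le_aleph0_iff.2 hcount.to_subtype, hV, hcon⟩)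
    obtain ⟨U, hU, hxU, hUO⟩ := normal_exists_closure_subset isClosed_singleton hO
      (singleton_subset_iff.2 hxO)
    obtain ⟨U', hU', hxU', hUU'⟩ := normal_exists_closure_subset isClosed_singleton hU hxU
    refine ⟨(U', (closure U)ᶜ), ⟨hU', isClosed_closure.isOpen_compl, ?_⟩,
      singleton_subset_iff.1 hxU', fun V hVm => ?_⟩
    · have : closure (closure U)ᶜ ⊆ Uᶜ :=
        closure_minimal (compl_subset_compl.2 subset_closure) hU.isClosed_compl
      exact (disjoint_compl_right.mono_left hUU').mono_right this
    · obtain ⟨v, hv, hvO⟩ := not_subset.1 (hOV V hVm)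
      exact ⟨v, hv, fun h => hvO (hUO h)⟩
  choose p hp hxp hpV using hnhds
  obtain ⟨t, ht⟩ := isCompact_univ.elim_finite_subcover (fun x => (p x).1) (fun x => (hp x).1)
    (fun x _ => mem_iUnion.2 ⟨x, hxp x⟩)
  by_contra! hcon
  have hshrink : ∀ x, ∀ V₀ ∈ 𝒱, ∃ V ∈ 𝒱, V ⊆ V₀ ∧ V ∩ (p x).1 = ∅ := by
    intro x V₀ hV₀
    obtain ⟨V, hVm, hVV, hh⟩ := hcon V₀ hV₀ (p x) (hp x)
    refine ⟨V, hVm, hVV, ?_⟩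
    by_contra hn
    exact (hpV x V hVm).ne_empty (hh (nonempty_iff_ne_empty.2 hn))
  have hfin : ∀ t : Finset X, ∃ V ∈ 𝒱, ∀ x ∈ t, V ∩ (p x).1 = ∅ := by
    classical
    intro t
    induction t using Finset.induction_on with
    | empty => exact hne.imp fun V hV => ⟨hV, by simp⟩
    | insert x t _ ih =>
      obtain ⟨V, hVm, hVt⟩ := ih
      obtain ⟨V', hV'm, hVV', hx⟩ := hshrink x V hVm
      refine ⟨V', hV'm, fun y hy => ?_⟩
      rcases Finset.mem_insert.1 hy with rfl | hy
      · exact hx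
      · exact subset_eq_empty (inter_subset_inter_left _ hVV') (hVt y hy)
  obtain ⟨V, hVm, hVt⟩ := hfin t
  obtain ⟨v, hv⟩ := (hV V hVm).2
  obtain ⟨x, hx, hvx⟩ := mem_iUnion₂.1 (ht (mem_univ v))
  exact eq_empty_iff_forall_notMem.1 (hVt x hx) v ⟨hv, hvx⟩

/-- If no point has a countable local `π`-base, there is an uncountable independent family of
separated pairs. -/
theorem exists_uncountable_independentIn [CompactSpace X] [T2Space X] [Nonempty X]
    (hπ : ∀ x : X, ¬ piCharPt x ≤ ℵ₀) :
    ∃ (W : Set X) (𝓕 : Set (Set X × Set X)), ¬ 𝓕.Countable ∧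
      (∀ p ∈ 𝓕, IsSeparatedPair p) ∧ IndependentIn W 𝓕 := by
  classical
  by_contra! hcon
  choose! 𝓕 h𝓕 using fun (W : Set X) (hW : W.Nonempty) => exists_maximal_independentIn hW
  have hcount : ∀ W : Set X, W.Nonempty → (𝓕 W).Countable := fun W hW => by
    by_contra hn
    exact hcon W (𝓕 W) hn (h𝓕 W hW).prop.1 (h𝓕 W hW).prop.2
  let 𝒱 : ℕ → Set (Set X) := fun n =>
    Nat.rec {Set.univ} (fun _ 𝒰 => ⋃ V ∈ 𝒰, pairCombinations V (𝓕 V)) n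
  have h𝒱 : ∀ n, (𝒱 n).Countable ∧ ∀ V ∈ 𝒱 n, IsOpen V ∧ V.Nonempty := by
    intro n
    induction n with
    | zero =>
      refine ⟨countable_singleton _, ?_⟩
      rintro V rfl
      exact ⟨isOpen_univ, univ_nonempty⟩
    | succ n ih =>
      refine ⟨ih.1.biUnion fun V hV => countable_pairCombinations V (hcount V (ih.2 V hV).2), ?_⟩
      intro V hV
      obtain ⟨W, hW, hVne, s, t, hs, ht, rfl⟩ := mem_iUnion₂.1 hV
      have hW' := ih.2 W hW
      have hsep := (h𝓕 W hW'.2).prop.1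
      exact ⟨isOpen_pairCombination hW'.1 (fun p hp => hsep p (hs hp))
        (fun p hp => hsep p (ht hp)), hVne⟩
  obtain ⟨V, hVm, p, hp, hsplit⟩ := exists_separatedPair_splitting hπ (𝒱 := ⋃ n, 𝒱 n)
    (countable_iUnion fun n => (h𝒱 n).1) ⟨Set.univ, mem_iUnion.2 ⟨0, rfl⟩⟩
    (fun V hV => by
      obtain ⟨n, hn⟩ := mem_iUnion.1 hV
      exact (h𝒱 n).2 V hn)
  obtain ⟨n, hn⟩ := mem_iUnion.1 hVm
  have hVne : V.Nonempty := ((h𝒱 n).2 V hn).2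
  obtain ⟨hsep, hind⟩ := (h𝓕 V hVne).prop
  have hcomb : ∀ s t : Finset (Set X × Set X), ↑s ⊆ 𝓕 V → ↑t ⊆ 𝓕 V → Disjoint s t →
      (pairCombination V s t ∩ p.1).Nonempty ∧ (pairCombination V s t ∩ p.2).Nonempty :=
    fun s t hs ht hst => hsplit _
      (mem_iUnion.2 ⟨n + 1, mem_iUnion₂.2 ⟨V, hn, hind s t hs ht hst, s, t, hs, ht, rfl⟩⟩)
      inter_subset_left
  have hmax : p ∈ 𝓕 V := by
    refine (h𝓕 V hVne).le_of_ge (y := insert p (𝓕 V)) ⟨?_, ?_⟩ (subset_insert _ _)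
      (mem_insert _ _)
    · rintro q (rfl | hq)
      · exact hp
      · exact hsep q hq
    · intro s t hs ht hst
      have herase : ∀ r : Finset (Set X × Set X), ↑r ⊆ insert p (𝓕 V) → ↑(r.erase p) ⊆ 𝓕 V :=
        fun r hr q hq => by
          obtain ⟨hqp, hq⟩ := Finset.mem_erase.1 (Finset.mem_coe.1 hq)
          exact (hr hq).resolve_left hqp
      obtain ⟨h1, h2⟩ := hcomb (s.erase p) (t.erase p) (herase s hs) (herase t ht)
        (hst.mono (Finset.erase_subset _ _) (Finset.erase_subset _ _))
      have hmem : ∀ x ∈ pairCombination V (s.erase p) (t.erase p), (p ∈ s → x ∈ p.1) →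
          (p ∈ t → x ∈ p.2) → x ∈ pairCombination V s t := by
        rintro x ⟨hxV, hxs, hxt⟩ hps hpt
        refine ⟨hxV, mem_iInter₂.2 fun q hq => ?_, mem_iInter₂.2 fun q hq => ?_⟩
        · by_cases hqp : q = p
          · subst hqp
            exact hps hq
          · exact mem_iInter₂.1 hxs q (Finset.mem_erase.2 ⟨hqp, hq⟩)
        · by_cases hqp : q = p
          · subst hqp
            exact hpt hq
          · exact mem_iInter₂.1 hxt q (Finset.mem_erase.2 ⟨hqp, hq⟩)
      by_cases hps : p ∈ s
      · obtain ⟨x, hx, hx1⟩ := h1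
        exact ⟨x, hmem x hx (fun _ => hx1) fun hpt => absurd hpt (Finset.disjoint_left.1 hst hps)⟩
      · obtain ⟨x, hx, hx2⟩ := h2
        exact ⟨x, hmem x hx (fun h => absurd h hps) fun _ => hx2⟩
  obtain ⟨x, hx, hx2⟩ := (hcomb {p} ∅ (by simpa using hmax) (by simp) (by simp)).2
  have hx1 : x ∈ p.1 := by simpa using hx.2.1
  exact disjoint_left.1 hp.2.2 (subset_closure hx1) (subset_closure hx2)

/-- Šapirovskiĭ: a compactum without points of countable `π`-character contains a closed subspace
mapping onto an uncountable Cantor cube. -/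
theorem exists_isClosed_surjective_cantorCube [CompactSpace X] [T2Space X] [Nonempty X]
    (hπ : ∀ x : X, ¬ piCharPt x ≤ ℵ₀) :
    ∃ (F : Set X) (ι : Type u) (Φ : F → ι → Bool), IsClosed F ∧ Uncountable ι ∧
      Continuous Φ ∧ Function.Surjective Φ := by
  classical
  obtain ⟨W, 𝓕, hunc, hsep, hind⟩ := exists_uncountable_independentIn hπ
  let F : Set X := {x | ∀ p ∈ 𝓕, x ∈ closure p.1 ∪ closure p.2}
  have hF : IsClosed F := by
    simp only [F, ofPred_forall]
    exact isClosed_biInter fun p _ => isClosed_closure.union isClosed_closure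
  refine ⟨F, 𝓕, fun x p => decide ((x : X) ∈ closure p.1.1), hF, ?_, ?_, ?_⟩
  · exact not_countable_iff.1 fun h => hunc (countable_coe_iff.1 h)
  · refine continuous_pi fun p => (continuous_bool_rng true).2 ⟨?_, ?_⟩
    · have : (fun x : F => decide ((x : X) ∈ closure p.1.1)) ⁻¹' {true} =
          (↑) ⁻¹' closure p.1.1 := by
        ext x
        simp
      rw [this]
      exact isClosed_closure.preimage continuous_subtype_val
    · have : (fun x : F => decide ((x : X) ∈ closure p.1.1)) ⁻¹' {true} =
          ((↑) ⁻¹' closure p.1.2)ᶜ := by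
        ext x
        simp only [mem_preimage, mem_singleton_iff, decide_eq_true_eq, mem_compl_iff]
        exact ⟨fun h => disjoint_left.1 (hsep _ p.2).2.2 h, (x.2 _ p.2).resolve_right⟩
      rw [this]
      exact (isClosed_closure.preimage continuous_subtype_val).isOpen_compl
  · intro z
    let K : 𝓕 → Set X := fun p => if z p then closure p.1.1 else closure p.1.2
    have hK : ∀ p, IsClosed (K p) := fun p => by
      dsimp only [K]
      split_ifs <;> exact isClosed_closure
    obtain ⟨x, hx⟩ : (⋂ p, K p).Nonempty := by
      refine CompactSpace.iInter_nonempty hK fun s => ?_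
      obtain ⟨x, -, hx1, hx2⟩ := hind ((s.filter fun p => z p = true).image (↑))
        ((s.filter fun p => ¬ z p = true).image (↑))
        (fun q hq => by
          obtain ⟨p, -, rfl⟩ := Finset.mem_image.1 (Finset.mem_coe.1 hq)
          exact p.2)
        (fun q hq => by
          obtain ⟨p, -, rfl⟩ := Finset.mem_image.1 (Finset.mem_coe.1 hq)
          exact p.2)
        ((Finset.disjoint_image Subtype.val_injective).2 (Finset.disjoint_filter_filter_not _ _ _))
      refine ⟨x, mem_iInter₂.2 fun p hp => ?_⟩
      dsimp only [K]
      split_ifs with hz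
      · exact subset_closure (mem_iInter₂.1 hx1 p
          (Finset.mem_image_of_mem _ (Finset.mem_filter.2 ⟨hp, hz⟩)))
      · exact subset_closure (mem_iInter₂.1 hx2 p
          (Finset.mem_image_of_mem _ (Finset.mem_filter.2 ⟨hp, hz⟩)))
    rw [mem_iInter] at hx
    refine ⟨⟨x, fun p hp => ?_⟩, funext fun p => ?_⟩
    · have := hx ⟨p, hp⟩
      dsimp only [K] at this
      split_ifs at this
      · exact Or.inl this
      · exact Or.inr this
    · have := hx p
      dsimp only [K] at this
      cases hz : z p
      · rw [hz] at this
        exact decide_eq_false fun h => disjoint_left.1 (hsep _ p.2).2.2 h (by simpa using this)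
      · rw [hz] at this
        exact decide_eq_true (by simpa using this)

end Independent

/-- A non-empty compactum covered by countably many countably tight subspaces has a point of
countable `π`-character. -/
theorem exists_piCharPt_le_aleph0 {X : Type u} [TopologicalSpace X] [CompactSpace X] [T2Space X]
    [Nonempty X] {C : ℕ → Set X} (hcov : ⋃ n, C n = Set.univ) (hC : ∀ n, CountablyTightIn (C n)) :
    ∃ x : X, piCharPt x ≤ ℵ₀ := by
  by_contra! hcon
  obtain ⟨F, ι, Φ, hF, hι, hΦ, hsurj⟩ :=
    exists_isClosed_surjective_cantorCube fun x => not_le.2 (hcon x)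
  have : CompactSpace F := isCompact_iff_compactSpace.1 hF.isCompact
  exact not_surjective_cantorCube hΦ (C := fun n => (↑) ⁻¹' C n)
    (by rw [← preimage_iUnion, hcov, preimage_univ]) (fun n => (hC n).preimage_coe F) hsurj

/-- Lemma 2.4 of Juhász–van Mill: in a σ-CT compactum, every non-empty
open set contains a closed set with a point of countable π-character in it; consequently
every non-empty closed subspace has a point of countable π-character. -/
theorem stmt19 {X : Type u} [TopologicalSpace X] [CompactSpace X] [T2Space X]
    (C : ℕ → Set X) (hcov : ⋃ n, C n = Set.univ)
    (hct : ∀ n, tightness ↥(C n) ≤ ℵ₀) :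
    (∀ U : Set X, IsOpen U → U.Nonempty →
      ∃ F : Set X, IsClosed F ∧ F ⊆ U ∧ ∃ x : ↥F, piCharPt x ≤ ℵ₀) ∧
    (∀ F : Set X, IsClosed F → F.Nonempty → ∃ x : ↥F, piCharPt x ≤ ℵ₀) := by
  have hclosed : ∀ F : Set X, IsClosed F → F.Nonempty → ∃ x : ↥F, piCharPt x ≤ ℵ₀ := by
    intro F hF hne
    have : CompactSpace F := isCompact_iff_compactSpace.1 hF.isCompact
    have : Nonempty F := hne.to_subtype
    exact exists_piCharPt_le_aleph0 (C := fun n => (↑) ⁻¹' C n)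
      (by rw [← preimage_iUnion, hcov, preimage_univ])
      (fun n => (CountablyTightIn.of_tightness_le (hct n)).preimage_coe F)
  refine ⟨fun U _ ⟨x, hx⟩ => ?_, hclosed⟩
  exact ⟨{x}, isClosed_singleton, singleton_subset_iff.2 hx,
    hclosed {x} isClosed_singleton (singleton_nonempty x)⟩
end
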